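/- arXiv:1501.00327 — 3 statements merged into one kernel-verified Lean document; each statement's English description precedes it below -/
import Mathlib

section
/- The complement of the matroid M*(K_{3,3}) (realized as a set of points in PG(3,2)) is isomorphic to the direct sum U_{2,3} ⊕ U_{2,3}. -/
open Set Matroid
open scoped Classical

/-- `M` is the binary matroid on ground set `E` represented by the vectors `v`. -/
def IsBinRepOn {α W : Type*} [AddCommGroup W] [Module (ZMod 2) W]
    (M : Matroid α) (E : Set α) (v : α → W) : Prop :=
  M.E = E ∧ ∀ I ⊆ E, (M.Indep I ↔ LinearIndependent (ZMod 2) (fun x : I => v x))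

/-- Isomorphism of matroids: a bijection of ground sets preserving independence. -/
def MatroidIso {α β : Type*} (M : Matroid α) (N : Matroid β) : Prop :=
  ∃ e : M.E ≃ N.E, ∀ I : Set M.E,
    (M.Indep (Subtype.val '' I) ↔ N.Indep (Subtype.val '' (e '' I)))

/-- The incidence vector of an edge, over GF(2). -/
noncomputable def incVec {V : Type*} (e : Sym2 V) : V → ZMod 2 :=
  fun v => if v ∈ e then 1 else 0

/-- `M` is the cycle matroid of the graph `G`, i.e. the binary matroid on the edge set of `G`
represented by the GF(2) incidence vectors of the edges. -/
def IsCycleMatroidOf {V : Type*} (M : Matroid (Sym2 V)) (G : SimpleGraph V) : Prop :=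
  IsBinRepOn M G.edgeSet incVec

/-- Deletion of a set of elements from a matroid. -/
def mDel {α : Type*} (M : Matroid α) (D : Set α) : Matroid α := M ↾ (M.E \ D)

/-- Contraction of a set of elements in a matroid. -/
def mCon {α : Type*} (M : Matroid α) (C : Set α) : Matroid α := (mDel M✶ C)✶

/-- A circuit of a matroid: a minimal dependent set. -/
def mCircuit {α : Type*} (M : Matroid α) (C : Set α) : Prop :=
  C ⊆ M.E ∧ ¬ M.Indep C ∧ ∀ x ∈ C, M.Indep (C \ {x})

/-- A cocircuit of a matroid: a circuit of the dual. -/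
def mCocircuit {α : Type*} (M : Matroid α) (C : Set α) : Prop := mCircuit M✶ C

/-- The rank of a set in a matroid: the supremum of cardinalities of independent subsets. -/
noncomputable def mRk {α : Type*} (M : Matroid α) (X : Set α) : ℕ :=
  sSup (Set.ncard '' {I | I ⊆ X ∧ M.Indep I})

/-- A `k`-separation of a matroid. -/
def mKSep {α : Type*} (M : Matroid α) (k : ℕ) (X Y : Set α) : Prop :=
  Disjoint X Y ∧ X ∪ Y = M.E ∧ k ≤ X.ncard ∧ k ≤ Y.ncard ∧
    mRk M X + mRk M Y + 1 ≤ mRk M M.E + k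

/-- A matroid is `3`-connected if it has no 1- or 2-separations. -/
def mThreeConnected {α : Type*} (M : Matroid α) : Prop :=
  (∀ X Y, ¬ mKSep M 1 X Y) ∧ (∀ X Y, ¬ mKSep M 2 X Y)

/-- A matroid is internally 4-connected if it is 3-connected and
every 3-separation has a side of size exactly 3. -/
def mInternally4 {α : Type*} (M : Matroid α) : Prop :=
  mThreeConnected M ∧ ∀ X Y, mKSep M 3 X Y → min X.ncard Y.ncard = 3

/-- A matroid is binary if it is representable over GF(2). -/
def mBinary {α : Type*} (M : Matroid α) : Prop :=
  ∃ (n : ℕ) (v : α → (Fin n → ZMod 2)), IsBinRepOn M M.E v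

/-- `M` is the uniform matroid of rank `r` on all of `α`. -/
def mUniformOf {α : Type*} (M : Matroid α) (r : ℕ) : Prop :=
  M.E = univ ∧ ∀ I : Set α, (M.Indep I ↔ I.ncard ≤ r)

/-- The points of the binary projective space of rank 4, `PG(3,2)`. -/
abbrev PGpt (n : ℕ) := {v : Fin n → ZMod 2 // v ≠ 0}

/-- The quartic Möbius ladder on `2n+1` vertices. -/
def qml (n : ℕ) : SimpleGraph (ZMod (2 * n + 1)) :=
  SimpleGraph.circulantGraph {1, (n : ZMod (2 * n + 1))}

/-- The cubic Möbius ladder on `2n` vertices. -/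
def cml (n : ℕ) : SimpleGraph (ZMod (2 * n)) :=
  SimpleGraph.circulantGraph {1, (n : ZMod (2 * n))}

/-!
The star of a vertex is dependent in the dual of a cycle matroid, and over `ZMod 2` three distinct
nonzero dependent vectors sum to zero. So the points of `PG(3,2)` representing `M*(K_{3,3})` form a
`3 × 3` grid whose rows and columns all sum to zero. With `L` the line `PG(1,2)` and `ℓ` its three
points, `(ℓ (i + j), ℓ (i - j))` is such a grid in the span of the skew lines `L × 0` and `0 × L`,
consisting of the points on neither of them. The diagonal and antidiagonal sums of any such grid
define a linear isomorphism carrying this model to it. The complement of the model is the union of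
the two skew lines, which represents `U_{2,3} ⊕ U_{2,3}`.
-/

section ZModTwo

variable {ι W : Type*} [AddCommGroup W] [Module (ZMod 2) W] {f : ι → W}

theorem exists_three_le_card_and_sum_eq_zero {s : Finset ι} (hinj : InjOn f s)
    (hne : ∀ i ∈ s, f i ≠ 0) (hdep : ¬ LinearIndepOn (ZMod 2) f s) :
    ∃ t ⊆ s, 3 ≤ t.card ∧ ∑ i ∈ t, f i = 0 := by
  obtain ⟨g, hg, i, his, hgi⟩ := not_linearIndepOn_finset_iff.mp hdep
  set t := {j ∈ s | g j ≠ 0} with ht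
  have hts : t ⊆ s := Finset.filter_subset _ _
  have hsum : ∑ j ∈ t, f j = 0 := by
    rw [ht, Finset.sum_filter]
    refine (Finset.sum_congr rfl fun j _ => ?_).trans hg
    by_cases hj : g j = 0
    · rw [if_neg (not_not.mpr hj), hj, zero_smul]
    · rw [if_pos hj, Fin.eq_one_of_ne_zero (g j) hj]
      exact (one_smul (ZMod 2) (f j)).symm
  refine ⟨t, hts, ?_, hsum⟩
  have htpos : 0 < t.card := Finset.card_pos.mpr ⟨i, Finset.mem_filter.mpr ⟨his, hgi⟩⟩
  have hone : t.card ≠ 1 := fun h => by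
    obtain ⟨a, ha⟩ := Finset.card_eq_one.mp h
    rw [ha, Finset.sum_singleton] at hsum
    exact hne a (hts (ha ▸ Finset.mem_singleton_self a)) hsum
  have htwo : t.card ≠ 2 := fun h => by
    obtain ⟨a, b, hab, hab'⟩ := Finset.card_eq_two.mp h
    rw [hab', Finset.sum_pair hab, ← ZModModule.sub_eq_add, sub_eq_zero] at hsum
    exact hab (hinj (hts (by simp [hab'])) (hts (by simp [hab'])) hsum)
  omega

theorem sum_eq_zero_of_not_linearIndependent [Fintype ι] (hcard : Fintype.card ι ≤ 3)
    (hinj : Function.Injective f) (hne : ∀ i, f i ≠ 0) (hdep : ¬ LinearIndependent (ZMod 2) f) :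
    ∑ i, f i = 0 := by
  rw [← linearIndepOn_univ_iff, ← Finset.coe_univ] at hdep
  obtain ⟨t, -, ht, hsum⟩ := exists_three_le_card_and_sum_eq_zero hinj.injOn (fun i _ => hne i) hdep
  rwa [Finset.card_eq_iff_eq_univ t |>.mp (t.card_le_univ.antisymm (hcard.trans ht))] at hsum

theorem linearIndepOn_of_ncard_le_two {s : Set ι} (hfin : s.Finite) (hs : s.ncard ≤ 2)
    (hinj : InjOn f s) (hne : ∀ i ∈ s, f i ≠ 0) : LinearIndepOn (ZMod 2) f s := by
  lift s to Finset ι using hfin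
  by_contra hdep
  obtain ⟨t, hts, ht, -⟩ := exists_three_le_card_and_sum_eq_zero hinj hne hdep
  rw [Set.ncard_coe_finset] at hs
  have := Finset.card_le_card hts
  omega

end ZModTwo

theorem linearIndepOn_image_iff {ι κ R W : Type*} [Semiring R] [AddCommMonoid W] [Module R W]
    {v : κ → W} {φ : ι → κ} {s : Set ι} (hφ : InjOn φ s) :
    LinearIndepOn R v (φ '' s) ↔ LinearIndepOn R (v ∘ φ) s :=
  ⟨fun h => h.comp_of_image hφ, fun h => h.image_of_comp φ v⟩

theorem linearIndepOn_sumElim_inl_inr_iff {ι κ R W X : Type*} [Ring R] [AddCommGroup W] [Module R W]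
    [AddCommGroup X] [Module R X] {v : ι → W} {w : κ → X} {s : Set (ι ⊕ κ)} :
    LinearIndepOn R (Sum.elim (LinearMap.inl R W X ∘ v) (LinearMap.inr R W X ∘ w)) s ↔
      LinearIndepOn R v (Sum.inl ⁻¹' s) ∧ LinearIndepOn R w (Sum.inr ⁻¹' s) := by
  have hdisj : Disjoint
      (Submodule.span R ((LinearMap.inl R W X ∘ v) '' (Sum.inl ⁻¹' s)))
      (Submodule.span R ((LinearMap.inr R W X ∘ w) '' (Sum.inr ⁻¹' s))) := by
    refine LinearMap.disjoint_inl_inr.mono ?_ ?_ <;>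
    · rw [Submodule.span_le]
      rintro _ ⟨x, -, rfl⟩
      exact LinearMap.mem_range_self _ _
  conv_lhs => rw [← image_preimage_inl_union_image_preimage_inr s]
  rw [linearIndepOn_union_iff disjoint_image_inl_image_inr,
    linearIndepOn_image_iff Sum.inl_injective.injOn,
    linearIndepOn_image_iff Sum.inr_injective.injOn, ← image_comp, ← image_comp,
    Sum.elim_comp_inl, Sum.elim_comp_inr,
    LinearMap.linearIndepOn_iff_of_injOn _ LinearMap.inl_injective.injOn,
    LinearMap.linearIndepOn_iff_of_injOn _ LinearMap.inr_injective.injOn, and_iff_left hdisj]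

namespace MatroidIso

variable {α β : Type*} {M : Matroid α} {N : Matroid β}

theorem exists_bijOn [Nonempty β] (h : MatroidIso M N) :
    ∃ φ : α → β, BijOn φ M.E N.E ∧ ∀ I ⊆ M.E, (M.Indep I ↔ N.Indep (φ '' I)) := by
  obtain ⟨e, he⟩ := h
  let φ := Function.extend Subtype.val (fun x => (e x : β)) fun _ => Classical.arbitrary β
  have hφ (x : M.E) : φ x = e x := Subtype.val_injective.extend_apply _ _ x
  refine ⟨φ, ⟨fun x hx => hφ ⟨x, hx⟩ ▸ (e _).2, fun x hx y hy hxy => ?_, fun y hy => ?_⟩,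
    fun I hI => ?_⟩
  · rw [hφ ⟨x, hx⟩, hφ ⟨y, hy⟩] at hxy
    exact congrArg Subtype.val (e.injective (Subtype.ext hxy))
  · exact ⟨e.symm ⟨y, hy⟩, (e.symm _).2, by simp [hφ]⟩
  · lift I to Set M.E using hI
    simp only [he, image_image, hφ]

theorem of_bijOn {φ : α → β} (hφ : BijOn φ M.E N.E)
    (h : ∀ I ⊆ M.E, (M.Indep I ↔ N.Indep (φ '' I))) : MatroidIso M N := by
  refine ⟨hφ.equiv φ, fun I => (h _ (Subtype.coe_image_subset _ I)).trans ?_⟩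
  simp only [image_image]
  rfl

theorem symm (h : MatroidIso M N) : MatroidIso N M := by
  obtain ⟨e, he⟩ := h
  exact ⟨e.symm, fun I => by simp [he]⟩

end MatroidIso

namespace IsBinRepOn

variable {α β W X : Type*} [AddCommGroup W] [Module (ZMod 2) W] [AddCommGroup X]
  [Module (ZMod 2) X] {M : Matroid α} {N : Matroid β} {E : Set α} {F : Set β} {v : α → W}
  {w : β → X}

theorem indep_iff (h : IsBinRepOn M E v) {I : Set α} (hI : I ⊆ E) :
    M.Indep I ↔ LinearIndepOn (ZMod 2) v I :=
  h.2 I hI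

theorem restrict (h : IsBinRepOn M E v) {R : Set α} (hR : R ⊆ E) : IsBinRepOn (M ↾ R) R v :=
  ⟨rfl, fun I hI => by rw [restrict_indep_iff, and_iff_left hI, h.2 I (hI.trans hR)]⟩

theorem matroidIso (hM : IsBinRepOn M E v) (hN : IsBinRepOn N F w) {φ : α → β}
    (hφ : BijOn φ E F) {T : W →ₗ[ZMod 2] X} (hT : Function.Injective T)
    (hTv : ∀ x ∈ E, w (φ x) = T (v x)) : MatroidIso M N := by
  refine .of_bijOn (φ := φ) (by rwa [hM.1, hN.1]) fun I hI => ?_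
  rw [hM.1] at hI
  rw [hM.indep_iff hI, hN.indep_iff ((image_mono hI).trans hφ.image_eq.subset),
    linearIndepOn_image_iff (hφ.injOn.mono hI), ← T.linearIndepOn_iff_of_injOn hT.injOn]
  exact linearIndepOn_congr fun x hx => (hTv x (hI hx)).symm

theorem mem_span_image_isBase (h : IsBinRepOn M E v) {B : Set α} (hB : M.IsBase B) {x : α}
    (hx : x ∈ E) : v x ∈ Submodule.span (ZMod 2) (v '' B) := by
  have hBE : B ⊆ E := h.1 ▸ hB.subset_ground
  by_cases hxB : x ∈ B
  · exact Submodule.subset_span (mem_image_of_mem v hxB)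
  by_contra hspan
  have hind : M.Indep (insert x B) := (h.indep_iff (insert_subset hx hBE)).mpr
    (((h.indep_iff hBE).mp hB.indep).insert hspan)
  exact hxB (hB.mem_of_insert_indep hind)

-- A base avoiding the support of `ξ ∘ v` would span, yet lie in the kernel of `ξ`.
theorem not_dual_indep_support (h : IsBinRepOn M E v) (ξ : W →ₗ[ZMod 2] ZMod 2) {x : α}
    (hx : x ∈ E) (hξ : ξ (v x) ≠ 0) : ¬ M✶.Indep {y ∈ E | ξ (v y) ≠ 0} := by
  rw [dual_indep_iff_exists']
  rintro ⟨-, B, hB, hdisj⟩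
  have hker : Submodule.span (ZMod 2) (v '' B) ≤ LinearMap.ker ξ := by
    rw [Submodule.span_le]
    rintro _ ⟨y, hy, rfl⟩
    by_contra hne
    exact hdisj.notMem_of_mem_right hy ⟨h.1 ▸ hB.subset_ground hy, hne⟩
  exact hξ (hker (h.mem_span_image_isBase hB hx))

theorem sum (hM : IsBinRepOn M univ v) (hN : IsBinRepOn N univ w) :
    IsBinRepOn (M.sum N) univ
      (Sum.elim (LinearMap.inl (ZMod 2) W X ∘ v) (LinearMap.inr (ZMod 2) W X ∘ w)) := by
  refine ⟨by simp [hM.1, hN.1, range_inl_union_range_inr], fun I _ => ?_⟩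
  rw [sum_indep_iff, hM.indep_iff (subset_univ _), hN.indep_iff (subset_univ _)]
  exact linearIndepOn_sumElim_inl_inr_iff.symm

theorem of_mUniformOf_two (hM : mUniformOf M 2) (hW : Module.finrank (ZMod 2) W = 2)
    (hinj : Function.Injective v) (hne : ∀ x, v x ≠ 0) : IsBinRepOn M univ v := by
  have : Module.Finite (ZMod 2) W := Module.finite_of_finrank_pos (by omega)
  have : Finite W := Module.finite_of_finite (ZMod 2)
  have : Finite α := Finite.of_injective v hinj
  refine ⟨hM.1, fun I _ => (hM.2 I).trans ⟨fun hI => ?_, fun hI => ?_⟩⟩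
  · exact linearIndepOn_of_ncard_le_two I.toFinite hI hinj.injOn fun x _ => hne x
  · have := Fintype.ofFinite I
    rw [← Nat.card_coe_set_eq, Nat.card_eq_fintype_card, ← hW]
    exact hI.fintype_card_le_finrank

theorem exists_of_matroidIso [Nonempty β] (hN : IsBinRepOn N F w) (h : MatroidIso M N) :
    ∃ φ : α → β, BijOn φ M.E F ∧ IsBinRepOn M M.E (w ∘ φ) := by
  obtain ⟨φ, hφ, hind⟩ := h.exists_bijOn
  rw [hN.1] at hφ
  refine ⟨φ, hφ, rfl, fun I hI => (hind I hI).trans ?_⟩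
  rw [hN.indep_iff ((image_mono hI).trans hφ.image_eq.subset),
    linearIndepOn_image_iff (hφ.injOn.mono hI)]
  rfl

end IsBinRepOn

section Grid

/-- The three points of the projective line `PG(1,2)`. -/
def linePoint : Fin 3 → Fin 2 → ZMod 2 := ![![1, 0], ![0, 1], ![1, 1]]

theorem linePoint_injective : Function.Injective linePoint := by decide

theorem linePoint_ne_zero : ∀ k, linePoint k ≠ 0 := by decide

theorem exists_linePoint_eq : ∀ {x}, x ≠ 0 → ∃ k, linePoint k = x := by decide

/-- The points of `PG(3,2)` on neither of the skew lines `L × 0` and `0 × L`, where `L` is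
`PG(1,2)`. The indexing makes the sum of each row and of each column of the `3 × 3` grid zero. -/
def gridPoint (p : Fin 3 × Fin 3) : (Fin 2 → ZMod 2) × (Fin 2 → ZMod 2) :=
  (linePoint (p.1 + p.2), linePoint (p.1 - p.2))

/-- The points of `PG(3,2)` on the skew lines `L × 0` and `0 × L`, where `L` is `PG(1,2)`. -/
def skewLinesPoint : Fin 3 ⊕ Fin 3 → (Fin 2 → ZMod 2) × (Fin 2 → ZMod 2) :=
  Sum.elim (LinearMap.inl (ZMod 2) _ _ ∘ linePoint) (LinearMap.inr (ZMod 2) _ _ ∘ linePoint)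

theorem skewLinesPoint_injective : Function.Injective skewLinesPoint := by
  refine (LinearMap.inl_injective.comp linePoint_injective).sumElim
    (LinearMap.inr_injective.comp linePoint_injective) fun k l h => linePoint_ne_zero k ?_
  simpa using congrArg Prod.fst h

theorem range_skewLinesPoint :
    range skewLinesPoint = {z | z ≠ 0 ∧ (z.1 = 0 ∨ z.2 = 0)} := by
  ext ⟨x, y⟩
  constructor
  · rintro ⟨k | k, hk⟩ <;> obtain ⟨rfl, rfl⟩ := Prod.mk.inj hk <;>
      simp [linePoint_ne_zero k]
  · rintro ⟨hz, rfl | rfl⟩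
    · obtain ⟨k, rfl⟩ := exists_linePoint_eq (x := y) (by rintro rfl; exact hz rfl)
      exact ⟨.inr k, rfl⟩
    · obtain ⟨k, rfl⟩ := exists_linePoint_eq (x := x) (by rintro rfl; exact hz rfl)
      exact ⟨.inl k, rfl⟩

theorem skewLinesPoint_ne_zero (q : Fin 3 ⊕ Fin 3) : skewLinesPoint q ≠ 0 :=
  (range_skewLinesPoint.subset (mem_range_self q)).1

theorem exists_add_eq_and_sub_eq : ∀ k l : Fin 3, ∃ i j, i + j = k ∧ i - j = l := by decide

theorem range_gridPoint : range gridPoint = {z | z.1 ≠ 0 ∧ z.2 ≠ 0} := by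
  ext ⟨x, y⟩
  constructor
  · rintro ⟨p, hp⟩
    obtain ⟨rfl, rfl⟩ := Prod.mk.inj hp
    exact ⟨linePoint_ne_zero (p.1 + p.2), linePoint_ne_zero (p.1 - p.2)⟩
  · rintro ⟨hx, hy⟩
    obtain ⟨k, rfl⟩ := exists_linePoint_eq hx
    obtain ⟨l, rfl⟩ := exists_linePoint_eq hy
    obtain ⟨i, j, rfl, rfl⟩ := exists_add_eq_and_sub_eq k l
    exact ⟨(i, j), rfl⟩

theorem mem_range_skewLinesPoint_iff {z} (hz : z ≠ 0) :
    z ∈ range skewLinesPoint ↔ z ∉ range gridPoint := by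
  rw [range_skewLinesPoint, range_gridPoint]
  simp only [mem_ofPred_eq, ne_eq, hz, not_false_eq_true, true_and, not_and_or, not_not]

theorem exists_gridPoint_sub_eq_skewLinesPoint :
    ∀ q, ∃ p p', p ≠ p' ∧ gridPoint p - gridPoint p' = skewLinesPoint q := by
  decide

variable {W : Type*} [AddCommGroup W]

/-- The sum of `f` over the cells `(i, j)` of the grid with `i + j = k`. -/
def diagSum (f : Fin 3 × Fin 3 → W) (k : Fin 3) : W := ∑ i, f (i, k - i)

/-- The sum of `f` over the cells `(i, j)` of the grid with `i - j = k`. -/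
def antidiagSum (f : Fin 3 × Fin 3 → W) (k : Fin 3) : W := ∑ i, f (i, i - k)

variable {f : Fin 3 × Fin 3 → W}

theorem sum_diagSum (hrow : ∀ i, ∑ j, f (i, j) = 0) : ∑ k, diagSum f k = 0 := by
  simp only [diagSum]
  rw [Finset.sum_comm]
  exact Finset.sum_eq_zero fun i _ =>
    ((Equiv.subRight i).sum_comp fun j => f (i, j)).trans (hrow i)

theorem sum_antidiagSum (hrow : ∀ i, ∑ j, f (i, j) = 0) : ∑ k, antidiagSum f k = 0 := by
  simp only [antidiagSum]
  rw [Finset.sum_comm]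
  exact Finset.sum_eq_zero fun i _ =>
    ((Equiv.subLeft i).sum_comp fun j => f (i, j)).trans (hrow i)

variable [Module (ZMod 2) W]

theorem add_eq_of_sum_fin_three_eq_zero {a : Fin 3 → W} (ha : ∑ k, a k = 0) {i j k : Fin 3}
    (hij : i ≠ j) (hik : i ≠ k) (hjk : j ≠ k) : a i + a j = a k := by
  have huniv : Finset.univ = {i, j, k} := by
    revert i j k
    decide
  rw [huniv, Finset.sum_insert (by simp [hij, hik]), Finset.sum_pair hjk, ← add_assoc,
    ← ZModModule.sub_eq_add, sub_eq_zero] at ha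
  exact ha

-- The diagonal and the antidiagonal through `(i, j)` meet every row `i' ≠ i` in the two cells
-- outside column `j`, which sum to `f (i', j)`.
theorem diagSum_add_antidiagSum (hrow : ∀ i, ∑ j, f (i, j) = 0) (hcol : ∀ j, ∑ i, f (i, j) = 0)
    (i j : Fin 3) : diagSum f (i + j) + antidiagSum f (i - j) = f (i, j) := by
  have hcells (i' : Fin 3) : f (i', i + j - i') + f (i', i' - (i - j)) =
      f (i', j) + if i' = i then f (i, j) else 0 := by
    split_ifs with hi
    · subst hi
      simp
    · have hdistinct : i + j - i' ≠ i' - (i - j) ∧ i + j - i' ≠ j ∧ i' - (i - j) ≠ j := by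
        revert i j i'
        decide
      rw [add_zero]
      exact add_eq_of_sum_fin_three_eq_zero (hrow i') hdistinct.1 hdistinct.2.1 hdistinct.2.2
  calc diagSum f (i + j) + antidiagSum f (i - j)
      = ∑ i', (f (i', j) + if i' = i then f (i, j) else 0) := by
        simp only [diagSum, antidiagSum, ← Finset.sum_add_distrib, hcells]
    _ = f (i, j) := by
        rw [Finset.sum_add_distrib, hcol, zero_add, Finset.sum_ite_eq' Finset.univ i,
          if_pos (Finset.mem_univ i)]

/-- The linear extension to `(ZMod 2)²` of a map `a` on the three points of `PG(1,2)`. It takes the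
prescribed value at the third point only when `∑ k, a k = 0`. -/
def lineLift (a : Fin 3 → W) : (Fin 2 → ZMod 2) →ₗ[ZMod 2] W :=
  Fintype.linearCombination (ZMod 2) ![a 0, a 1]

theorem lineLift_linePoint {a : Fin 3 → W} (ha : ∑ k, a k = 0) (k : Fin 3) :
    lineLift a (linePoint k) = a k := by
  have hsum : a 0 + a 1 = a 2 :=
    add_eq_of_sum_fin_three_eq_zero ha (by decide) (by decide) (by decide)
  fin_cases k <;> simp [lineLift, linePoint, Fintype.linearCombination_apply, hsum]

theorem exists_injective_linearMap_gridPoint (hinj : Function.Injective f) (hne : ∀ p, f p ≠ 0)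
    (hrow : ∀ i, ∑ j, f (i, j) = 0) (hcol : ∀ j, ∑ i, f (i, j) = 0) :
    ∃ T : (Fin 2 → ZMod 2) × (Fin 2 → ZMod 2) →ₗ[ZMod 2] W,
      Function.Injective T ∧ ∀ p, T (gridPoint p) = f p := by
  let T := (lineLift (diagSum f)).coprod (lineLift (antidiagSum f))
  have hT (p) : T (gridPoint p) = f p := by
    simp only [T, gridPoint, LinearMap.coprod_apply, lineLift_linePoint (sum_diagSum hrow),
      lineLift_linePoint (sum_antidiagSum hrow), diagSum_add_antidiagSum hrow hcol]
  refine ⟨T, (injective_iff_map_eq_zero T).mpr fun z hz => ?_, hT⟩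
  by_contra hz0
  by_cases hgrid : z ∈ range gridPoint
  · obtain ⟨p, rfl⟩ := hgrid
    exact hne p (hT p ▸ hz)
  · obtain ⟨q, rfl⟩ := (mem_range_skewLinesPoint_iff hz0).mpr hgrid
    obtain ⟨p, p', hpp', hq⟩ := exists_gridPoint_sub_eq_skewLinesPoint q
    rw [← hq, map_sub, hT, hT, sub_eq_zero] at hz
    exact hpp' (hinj hz)

theorem exists_bijOn_skewLinesPoint_compl_range {F : Fin 3 × Fin 3 → PGpt 4}
    {T : (Fin 2 → ZMod 2) × (Fin 2 → ZMod 2) →ₗ[ZMod 2] Fin 4 → ZMod 2}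
    (hT : Function.Injective T) (hTF : ∀ p, T (gridPoint p) = F p) :
    ∃ G : Fin 3 ⊕ Fin 3 → PGpt 4,
      BijOn G univ (range F)ᶜ ∧ ∀ q, (G q : Fin 4 → ZMod 2) = T (skewLinesPoint q) := by
  have hsurj : Function.Surjective T :=
    (LinearMap.injective_iff_surjective_of_finrank_eq_finrank (by simp)).mp hT
  have hF (z x) (hz : T z = (x : PGpt 4).1) : x ∈ range F ↔ z ∈ range gridPoint :=
    exists_congr fun p => by rw [← hT.eq_iff, hTF, hz, Subtype.ext_iff]
  refine ⟨fun q => ⟨T (skewLinesPoint q), (map_ne_zero_iff T hT).mpr (skewLinesPoint_ne_zero q)⟩,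
    ⟨fun q _ => ?_, fun q _ q' _ h => ?_, fun x hx => ?_⟩, fun _ => rfl⟩
  · rw [mem_compl_iff, hF (skewLinesPoint q) _ rfl,
      ← mem_range_skewLinesPoint_iff (skewLinesPoint_ne_zero q)]
    exact mem_range_self q
  · exact skewLinesPoint_injective (hT (congrArg Subtype.val h))
  · obtain ⟨z, hz⟩ := hsurj x
    have hz0 : z ≠ 0 := fun h => x.2 (by rw [← hz, h, map_zero])
    rw [mem_compl_iff, hF z x hz, ← mem_range_skewLinesPoint_iff hz0] at hx
    obtain ⟨q, rfl⟩ := hx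
    exact ⟨q, mem_univ q, Subtype.ext hz⟩

end Grid

section CompleteBipartite

theorem IsCycleMatroidOf.not_dual_indep_incidenceSet {V : Type*} {N : Matroid (Sym2 V)}
    {G : SimpleGraph V} (hN : IsCycleMatroidOf N G) {v : V} (hv : (G.incidenceSet v).Nonempty) :
    ¬ N✶.Indep (G.incidenceSet v) := by
  obtain ⟨e, heG, hve⟩ := hv
  have hmem (e : Sym2 V) : LinearMap.proj (R := ZMod 2) v (incVec e) ≠ 0 ↔ v ∈ e := by
    simp [incVec]
  have hdep := IsBinRepOn.not_dual_indep_support hN (LinearMap.proj v) heG ((hmem e).mpr hve)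
  simp only [hmem] at hdep
  exact hdep

theorem IsCycleMatroidOf.sum_incidenceSet_eq_zero {V W ι : Type*} [AddCommGroup W]
    [Module (ZMod 2) W] [Fintype ι] {N : Matroid (Sym2 V)} {G : SimpleGraph V}
    (hN : IsCycleMatroidOf N G) {v : Sym2 V → W} (hv : IsBinRepOn N✶ G.edgeSet v)
    (hinj : InjOn v G.edgeSet) (hne : ∀ e ∈ G.edgeSet, v e ≠ 0) (hι : Fintype.card ι ≤ 3) {x : V}
    {e : ι → Sym2 V} (he : Function.Injective e) (hrange : range e = G.incidenceSet x) :
    ∑ i, v (e i) = 0 := by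
  cases isEmpty_or_nonempty ι
  · exact Fintype.sum_empty _
  have heG (i) : e i ∈ G.edgeSet := G.incidenceSet_subset x (hrange ▸ mem_range_self i)
  refine sum_eq_zero_of_not_linearIndependent (f := v ∘ e) hι
    (fun i j h => he (hinj (heG i) (heG j) h)) (fun i => hne _ (heG i)) ?_
  rw [← linearIndepOn_range_iff he, hrange, ← hv.indep_iff (G.incidenceSet_subset x)]
  exact hN.not_dual_indep_incidenceSet (hrange ▸ range_nonempty e)

variable {α β : Type*}

/-- The edge of the complete bipartite graph on `α ⊕ β` with the given ends. -/
def bipartiteEdge (p : α × β) : Sym2 (α ⊕ β) := s(.inl p.1, .inr p.2)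

theorem bipartiteEdge_injective : Function.Injective (bipartiteEdge (α := α) (β := β)) := by
  rintro ⟨a, b⟩ ⟨a', b'⟩ h
  simpa [bipartiteEdge] using h

theorem range_bipartiteEdge :
    range (bipartiteEdge (α := α) (β := β)) = (completeBipartiteGraph α β).edgeSet := by
  ext e
  induction e with | _ x y
  rcases x with a | b <;> rcases y with a' | b' <;> simp [bipartiteEdge]

theorem range_bipartiteEdge_left (a : α) :
    range (fun b : β => bipartiteEdge (a, b)) =
      (completeBipartiteGraph α β).incidenceSet (.inl a) := by
  ext e
  induction e with | _ x y
  rcases x with a | b <;> rcases y with a' | b' <;>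
    simp [bipartiteEdge, SimpleGraph.mk'_mem_incidenceSet_iff]

theorem range_bipartiteEdge_right (b : β) :
    range (fun a : α => bipartiteEdge (a, b)) =
      (completeBipartiteGraph α β).incidenceSet (.inr b) := by
  ext e
  induction e with | _ x y
  rcases x with a | b <;> rcases y with a' | b' <;>
    simp [bipartiteEdge, SimpleGraph.mk'_mem_incidenceSet_iff]

theorem exists_grid_of_matroidIso_dual {n : ℕ} {P : Matroid (PGpt n)}
    {E : Set (PGpt n)} (hP : IsBinRepOn P E Subtype.val) {N : Matroid (Sym2 (Fin 3 ⊕ Fin 3))}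
    (hN : IsCycleMatroidOf N (completeBipartiteGraph (Fin 3) (Fin 3))) (h : MatroidIso N✶ P) :
    ∃ F : Fin 3 × Fin 3 → PGpt n, Function.Injective F ∧ range F = E ∧
      (∀ i, ∑ j, (F (i, j)).val = 0) ∧ ∀ j, ∑ i, (F (i, j)).val = 0 := by
  have hground : N✶.E.Nonempty := by
    rw [dual_ground, hN.1, ← range_bipartiteEdge]
    exact range_nonempty _
  have : Nonempty (PGpt n) := h.elim fun e _ => ⟨e ⟨_, hground.some_mem⟩⟩
  obtain ⟨φ, hφ, hv⟩ := hP.exists_of_matroidIso h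
  rw [dual_ground, hN.1] at hφ hv
  have hinj : InjOn (Subtype.val ∘ φ) (completeBipartiteGraph (Fin 3) (Fin 3)).edgeSet :=
    Subtype.val_injective.comp_injOn hφ.injOn
  have hstar {x e} := hN.sum_incidenceSet_eq_zero (x := x) (e := e) hv hinj
    (fun e _ => (φ e).2) (Fintype.card_fin 3).le
  refine ⟨φ ∘ bipartiteEdge, fun p q hpq => bipartiteEdge_injective (hφ.injOn ?_ ?_ hpq), ?_,
    fun i => hstar ?_ (range_bipartiteEdge_left i), fun j => hstar ?_ (range_bipartiteEdge_right j)⟩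
  · exact range_bipartiteEdge.subset (mem_range_self p)
  · exact range_bipartiteEdge.subset (mem_range_self q)
  · rw [range_comp, range_bipartiteEdge, hφ.image_eq]
  · exact bipartiteEdge_injective.comp (Prod.mk_right_injective i)
  · exact bipartiteEdge_injective.comp (Prod.mk_left_injective j)

end CompleteBipartite

/-- The complement of `M*(K_{3,3})`, realized as a set of points of `PG(3,2)`,
is isomorphic to `U_{2,3} ⊕ U_{2,3}`. -/
theorem statement4 (PG : Matroid (PGpt 4)) (hPG : IsBinRepOn PG univ Subtype.val)
    (N : Matroid (Sym2 (Fin 3 ⊕ Fin 3)))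
    (hN : IsCycleMatroidOf N (completeBipartiteGraph (Fin 3) (Fin 3)))
    (E : Set (PGpt 4)) (hE : MatroidIso N✶ (PG ↾ E))
    (U U' : Matroid (Fin 3)) (hU : mUniformOf U 2) (hU' : mUniformOf U' 2) :
    MatroidIso (PG ↾ Eᶜ) (U.sum U') := by
  obtain ⟨F, hF, rfl, hrow, hcol⟩ :=
    exists_grid_of_matroidIso_dual (hPG.restrict (subset_univ E)) hN hE
  obtain ⟨T, hT, hTF⟩ := exists_injective_linearMap_gridPoint
    (Subtype.val_injective.comp hF) (fun p => (F p).2) hrow hcol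
  obtain ⟨G, hG, hGT⟩ := exists_bijOn_skewLinesPoint_compl_range hT hTF
  have hline {M : Matroid (Fin 3)} (hM : mUniformOf M 2) : IsBinRepOn M univ linePoint :=
    .of_mUniformOf_two hM (by simp) linePoint_injective linePoint_ne_zero
  have hsum : IsBinRepOn (U.sum U') univ skewLinesPoint := (hline hU).sum (hline hU')
  exact (hsum.matroidIso (hPG.restrict (subset_univ _)) hG hT fun q _ => hGT q).symm
end

section
/- A simple 3-connected graph G is internally 4-connected as a graph (i.e., for every partition (X,Y) of E(G) with 3 ≤ |X| ≤ |Y|, the number of vertices incident with edges in both X and Y is at least 3, with equality only if X is a triangle or the edge set of a degree-3 vertex) if and only if its cycle matroid M(G) is an internally 4-connected matroid. -/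
open Set Matroid
open scoped Classical

/-- A graph is 3-connected if it has more than 3 vertices and deleting any fewer than 3
vertices leaves it connected. -/
def GraphThreeConnected {V : Type*} (G : SimpleGraph V) : Prop :=
  3 < Nat.card V ∧ ∀ S : Set V, S.ncard < 3 → (SimpleGraph.induce Sᶜ G).Connected

/-- `V(X,Y)`: the vertices incident with edges in both `X` and `Y`. -/
def boundaryVerts {V : Type*} (X Y : Set (Sym2 V)) : Set V :=
  {v | (∃ e ∈ X, v ∈ e) ∧ (∃ e ∈ Y, v ∈ e)}

/-- `X` is the edge set of a triangle of `G`. -/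
def IsTriangleEdgeSet {V : Type*} (G : SimpleGraph V) (X : Set (Sym2 V)) : Prop :=
  ∃ a b c : V, a ≠ b ∧ a ≠ c ∧ b ≠ c ∧ G.Adj a b ∧ G.Adj b c ∧ G.Adj a c ∧
    X = {s(a, b), s(b, c), s(a, c)}

/-- `X` is the set of edges incident with a vertex of degree 3. -/
def IsDegree3Star {V : Type*} (G : SimpleGraph V) (X : Set (Sym2 V)) : Prop :=
  ∃ v : V, (G.neighborSet v).ncard = 3 ∧ X = {e ∈ G.edgeSet | v ∈ e}

/-- `G` is internally 4-connected as a graph: for every partition `(X,Y)` of the edge set with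
`3 ≤ |X| ≤ |Y|`, we have `|V(X,Y)| ≥ 3`, with equality only if `X` is a triangle or the star
of a degree-3 vertex. -/
def GraphInternally4 {V : Type*} (G : SimpleGraph V) : Prop :=
  ∀ X Y : Set (Sym2 V), Disjoint X Y → X ∪ Y = G.edgeSet →
    3 ≤ X.ncard → X.ncard ≤ Y.ncard →
    3 ≤ (boundaryVerts X Y).ncard ∧
      ((boundaryVerts X Y).ncard = 3 → IsTriangleEdgeSet G X ∨ IsDegree3Star G X)

/-! Let `(X, Y)` be a partition of the edges of a 3-connected graph `G` with boundary `B = V(X, Y)`.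
The rank of an edge set is the number of its vertices minus the number of components it induces.
Hence `r(X) + r(Y) - r(M)` is the cyclomatic number of the bipartite multigraph `H` whose vertices
are the components of `G[X]` and of `G[Y]`, each `v ∈ B` being an edge of `H` from the component of
`v` in `G[X]` to its component in `G[Y]`. A set of edges with at least `n` vertices is attached to
the rest of the graph at `n` or more vertices, if `n ≤ 3` and the rest has `n` vertices too. So
every component has degree at least 2 in `H`, and degree at least 3 unless it is a single edge.
Moreover no two components of degree 2 are adjacent in `H`, as they would meet in a vertex of degree
2 of `G`.

A degree count then shows that the cyclomatic number is at least 2. If it equals 2, then either all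
components on one side are single edges and there are at most three of them, or each side has
exactly one component of degree 3. In the second case `H` consists of three parallel edges, so that
`|B| = 3`, or is a dumbbell, that is, two cycles joined by a bridge. Cutting the dumbbell at its
bridge separates `G` at a single vertex, which is impossible. Thus the 3-separations of `M` with
both sides larger than 3 are the partitions with `|B| = 3` and both sides larger than 3, and a side
of size 3 in a partition with `|B| = 3` is a triangle or the star of a vertex. -/

section Counting

variable {α β γ : Type*} {s : Set α} {p : α → β} {q : α → γ}

lemma mul_ncard_image_add_sum_ncard_fiber_le (hs : s.Finite) {n : ℕ}
    (hn : ∀ v ∈ s, n ≤ (s ∩ p ⁻¹' {p v}).ncard) {T : Finset β} (hT : ↑T ⊆ p '' s) :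
    n * (p '' s).ncard + ∑ c ∈ T, (s ∩ p ⁻¹' {c}).ncard ≤ s.ncard + n * T.card := by
  lift s to Finset α using hs
  have hfiber (c : β) : (↑s ∩ p ⁻¹' {c}).ncard = (s.filter (p · = c)).card := by
    rw [← Set.ncard_coe_finset]
    congr 1
    ext
    simp
  have hTs : T ⊆ s.image p := by simpa [← Finset.coe_subset] using hT
  have hrest : (s.image p \ T).card * n ≤
      ∑ c ∈ s.image p \ T, (s.filter (p · = c)).card := by
    refine Finset.card_nsmul_le_sum _ _ _ fun c hc => ?_
    obtain ⟨v, hv, rfl⟩ := Finset.mem_image.1 (Finset.mem_sdiff.1 hc).1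
    exact hfiber (p v) ▸ hn v hv
  simp only [hfiber]
  rw [← Finset.coe_image, Set.ncard_coe_finset, Set.ncard_coe_finset,
    Finset.card_eq_sum_card_image p s, ← Finset.sum_sdiff hTs,
    ← Finset.card_sdiff_add_card_eq_card hTs]
  linarith

lemma mul_ncard_image_le (hs : s.Finite) {n : ℕ}
    (hn : ∀ v ∈ s, n ≤ (s ∩ p ⁻¹' {p v}).ncard) : n * (p '' s).ncard ≤ s.ncard := by
  simpa using mul_ncard_image_add_sum_ncard_fiber_le hs hn (T := ∅) (by simp)

lemma mul_ncard_image_add_ncard_fiber_le (hs : s.Finite) {n : ℕ}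
    (hn : ∀ v ∈ s, n ≤ (s ∩ p ⁻¹' {p v}).ncard) {x : α} (hx : x ∈ s) :
    n * (p '' s).ncard + (s ∩ p ⁻¹' {p x}).ncard ≤ s.ncard + n := by
  simpa using mul_ncard_image_add_sum_ncard_fiber_le hs hn (T := {p x})
    (by simpa using Set.mem_image_of_mem p hx)

lemma eq_of_three_le_ncard_fiber (hs : s.Finite) (h2 : ∀ v ∈ s, 2 ≤ (s ∩ p ⁻¹' {p v}).ncard)
    (hle : s.ncard ≤ 2 * (p '' s).ncard + 1) {x y : α} (hx : x ∈ s) (hy : y ∈ s)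
    (hx3 : 3 ≤ (s ∩ p ⁻¹' {p x}).ncard) (hy3 : 3 ≤ (s ∩ p ⁻¹' {p y}).ncard) : p x = p y := by
  by_contra hne
  have hsub : ↑({p x, p y} : Finset β) ⊆ p '' s := by
    simpa [Set.pair_subset_iff] using
      And.intro (Set.mem_image_of_mem p hx) (Set.mem_image_of_mem p hy)
  have := mul_ncard_image_add_sum_ncard_fiber_le hs h2 hsub
  rw [Finset.sum_pair hne, Finset.card_pair hne] at this
  omega

/-- View `s` as the edge set of a bipartite multigraph in which `v ∈ s` joins `p v` to `q v`. The
structure says that this multigraph is finite, that its minimum degree is at least 2 and that no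
two vertices of degree 2 are adjacent. It is applied to the boundary vertices of a partition of
the edges of a graph, with `p` and `q` sending a vertex to its component on either side. -/
structure BranchedBipartite (s : Set α) (p : α → β) (q : α → γ) : Prop where
  finite : s.Finite
  two_le_left : ∀ v ∈ s, 2 ≤ (s ∩ p ⁻¹' {p v}).ncard
  two_le_right : ∀ v ∈ s, 2 ≤ (s ∩ q ⁻¹' {q v}).ncard
  three_le_left_or_right :
    ∀ v ∈ s, 3 ≤ (s ∩ p ⁻¹' {p v}).ncard ∨ 3 ≤ (s ∩ q ⁻¹' {q v}).ncard

namespace BranchedBipartite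

lemma symm (h : BranchedBipartite s p q) : BranchedBipartite s q p :=
  ⟨h.finite, h.two_le_right, h.two_le_left, fun v hv => (h.three_le_left_or_right v hv).symm⟩

lemma ncard_image_add_ncard_image_lt (h : BranchedBipartite s p q) (hs : s.Nonempty) :
    (p '' s).ncard + (q '' s).ncard < s.ncard := by
  obtain ⟨v, hv⟩ := hs
  have hp := mul_ncard_image_add_ncard_fiber_le h.finite h.two_le_left hv
  have hq := mul_ncard_image_add_ncard_fiber_le h.finite h.two_le_right hv
  have hp2 := h.two_le_left v hv
  have hq2 := h.two_le_right v hv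
  rcases h.three_le_left_or_right v hv with h3 | h3 <;> omega

lemma ncard_image_left_le_three (h : BranchedBipartite s p q)
    (hs : s.ncard ≤ (p '' s).ncard + (q '' s).ncard + 1)
    (hp : ∀ v ∈ s, (s ∩ p ⁻¹' {p v}).ncard < 3) : (p '' s).ncard ≤ 3 := by
  have h2 := mul_ncard_image_le h.finite h.two_le_left
  have h3 := mul_ncard_image_le h.finite
    fun v hv => (h.three_le_left_or_right v hv).resolve_left (hp v hv).not_ge
  omega

/-- A degree sum leaves room for just one vertex of degree at least 3 on each side, and its degree
is then exactly 3: the multigraph is a dumbbell and its bridge lies in the displayed set. -/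
lemma eq_or_eq_and_ncard_inter_le_one (h : BranchedBipartite s p q)
    (hs : s.ncard ≤ (p '' s).ncard + (q '' s).ncard + 1) (hs3 : 3 < s.ncard)
    {x y : α} (hx : x ∈ s) (hy : y ∈ s)
    (hx3 : 3 ≤ (s ∩ p ⁻¹' {p x}).ncard) (hy3 : 3 ≤ (s ∩ q ⁻¹' {q y}).ncard) :
    (∀ v ∈ s, p v = p x ∨ q v = q y) ∧ (s ∩ p ⁻¹' {p x} ∩ q ⁻¹' {q y}).ncard ≤ 1 := by
  have hpx := mul_ncard_image_add_ncard_fiber_le h.finite h.two_le_left hx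
  have hqy := mul_ncard_image_add_ncard_fiber_le h.finite h.two_le_right hy
  have hcover : ∀ v ∈ s, p v = p x ∨ q v = q y := fun v hv =>
    (h.three_le_left_or_right v hv).imp
      (fun hv3 => eq_of_three_le_ncard_fiber h.finite h.two_le_left (by omega) hv hx hv3 hx3)
      (fun hv3 => eq_of_three_le_ncard_fiber h.finite h.two_le_right (by omega) hv hy hv3 hy3)
  refine ⟨hcover, ?_⟩
  have hunion := Set.ncard_union_add_ncard_inter (s ∩ p ⁻¹' {p x}) (s ∩ q ⁻¹' {q y})
    (h.finite.inter_of_left _) (h.finite.inter_of_left _)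
  have hsub : s ⊆ p ⁻¹' {p x} ∪ q ⁻¹' {q y} := hcover
  rw [← Set.inter_union_distrib_left, Set.inter_eq_left.2 hsub,
    ← Set.inter_inter_distrib_left, ← Set.inter_assoc] at hunion
  omega

end BranchedBipartite

end Counting

section Rank

variable {V : Type*}

lemma IsBinRepOn.mRk_eq_finrank_span {α W : Type*} [AddCommGroup W] [Module (ZMod 2) W]
    {M : Matroid α} {E X : Set α} {v : α → W} (hM : IsBinRepOn M E v) (hX : X ⊆ E)
    (hfin : X.Finite) :
    mRk M X = Module.finrank (ZMod 2) (Submodule.span (ZMod 2) (v '' X)) := by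
  have hcard {I : Set α} (hI : I ⊆ X) (hInd : M.Indep I) :
      I.ncard = Module.finrank (ZMod 2) (Submodule.span (ZMod 2) (v '' I)) := by
    have := (hfin.subset hI).fintype
    rw [Set.image_eq_range, finrank_span_eq_card ((hM.2 I (hI.trans hX)).1 hInd),
      ← Nat.card_eq_fintype_card, Nat.card_coe_set_eq]
  have := Module.Finite.span_of_finite (ZMod 2) (hfin.image v)
  apply IsGreatest.csSup_eq
  constructor
  · obtain ⟨I, hIX, -, hspan, hI⟩ :=
      exists_linearIndepOn_extension (linearIndepOn_empty (ZMod 2) v) (Set.empty_subset X)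
    have hInd : M.Indep I := (hM.2 I (hIX.trans hX)).2 hI
    refine ⟨I, ⟨hIX, hInd⟩, ?_⟩
    rw [hcard hIX hInd, le_antisymm (Submodule.span_mono (Set.image_mono hIX))
      (Submodule.span_le.2 hspan)]
  · rintro _ ⟨I, ⟨hIX, hInd⟩, rfl⟩
    rw [hcard hIX hInd]
    exact Submodule.finrank_mono (Submodule.span_mono (Set.image_mono hIX))

lemma incVec_mk_dotProduct [Fintype V] {u v : V} (huv : u ≠ v) (f : V → ZMod 2) :
    incVec s(u, v) ⬝ᵥ f = f u + f v := by
  have hsum : incVec s(u, v) = Pi.single u 1 + Pi.single v 1 := by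
    ext w
    by_cases hu : w = u <;> by_cases hv : w = v <;> simp_all [incVec]
  rw [hsum, add_dotProduct, single_one_dotProduct, single_one_dotProduct]

lemma connectedComponentMk_surjective (H : SimpleGraph V) :
    Function.Surjective H.connectedComponentMk :=
  Quot.mk_surjective

lemma mem_range_funLeft_connectedComponentMk_iff (R : Type*) [Semiring R] (H : SimpleGraph V)
    {f : V → R} :
    f ∈ LinearMap.range (LinearMap.funLeft R R H.connectedComponentMk) ↔
      ∀ u v, H.Adj u v → f u = f v := by
  constructor
  · rintro ⟨g, rfl⟩ u v huv
    exact congrArg g (SimpleGraph.ConnectedComponent.connectedComponentMk_eq_of_adj huv)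
  · intro hf
    have hwalk {u v : V} (w : H.Walk u v) : f u = f v := by
      induction w with
      | nil => rfl
      | cons hadj _ ih => exact (hf _ _ hadj).trans ih
    exact ⟨fun c => c.lift f fun _ _ w _ => hwalk w, rfl⟩

lemma finrank_span_incVec_add_card_connectedComponent [Finite V] (H : SimpleGraph V) :
    Module.finrank (ZMod 2) (Submodule.span (ZMod 2) (incVec '' H.edgeSet)) +
      Nat.card H.ConnectedComponent = Nat.card V := by
  have := Fintype.ofFinite V
  let A : Matrix H.edgeSet V (ZMod 2) := Matrix.of fun e => incVec e
  have hrow :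
      A.rank = Module.finrank (ZMod 2) (Submodule.span (ZMod 2) (incVec '' H.edgeSet)) := by
    rw [Matrix.rank_eq_finrank_span_row, Set.image_eq_range]
    rfl
  have hker : LinearMap.ker A.mulVecLin =
      LinearMap.range (LinearMap.funLeft (ZMod 2) (ZMod 2) H.connectedComponentMk) := by
    ext f
    rw [mem_range_funLeft_connectedComponentMk_iff, LinearMap.mem_ker, Matrix.mulVecLin_apply,
      funext_iff, Subtype.forall, Sym2.forall]
    refine forall₃_congr fun u v huv => ?_
    change incVec s(u, v) ⬝ᵥ f = 0 ↔ _
    rw [incVec_mk_dotProduct (H.ne_of_adj huv), CharTwo.add_eq_zero]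
  have hnull : Module.finrank (ZMod 2) (LinearMap.ker A.mulVecLin) =
      Nat.card H.ConnectedComponent := by
    rw [hker, LinearMap.finrank_range_of_inj (LinearMap.funLeft_injective_of_surjective _ _ _
      (connectedComponentMk_surjective H)), Module.finrank_pi, Nat.card_eq_fintype_card]
  rw [← hrow, ← hnull, Nat.card_eq_fintype_card, ← Module.finrank_pi (ZMod 2)]
  exact LinearMap.finrank_range_add_finrank_ker A.mulVecLin

lemma card_connectedComponent_eq [Finite V] {H : SimpleGraph V} {S : Set V} (hS : H.support ⊆ S) :
    Nat.card H.ConnectedComponent = (H.connectedComponentMk '' S).ncard + Sᶜ.ncard := by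
  have hsingle {u v : V} (hu : u ∉ S)
      (huv : H.connectedComponentMk u = H.connectedComponentMk v) : u = v := by
    by_contra hne
    have hreach : H.Reachable u v := SimpleGraph.ConnectedComponent.exact huv
    exact hu (hS (SimpleGraph.mem_support_of_reachable hne hreach))
  have hdisj : Disjoint (H.connectedComponentMk '' S) (H.connectedComponentMk '' Sᶜ) := by
    rw [Set.disjoint_left]
    rintro _ ⟨u, hu, rfl⟩ ⟨v, hv, hvu⟩
    exact hv (hsingle hv hvu ▸ hu)
  have hinj : Set.InjOn H.connectedComponentMk Sᶜ := fun u hu v _ huv => hsingle hu huv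
  rw [← hinj.ncard_image, ← Set.ncard_union_eq hdisj, ← Set.image_union,
    Set.union_compl_self, Set.image_univ, (connectedComponentMk_surjective H).range_eq,
    Set.ncard_univ]

end Rank

section Components

variable {V : Type*} {X Y : Set (Sym2 V)}

/-- The vertices of the graph induced by an edge set. -/
def edgeVerts (X : Set (Sym2 V)) : Set V := {v | ∃ e ∈ X, v ∈ e}

/-- The component of a vertex in the spanning subgraph with edge set `X`; a vertex outside
`edgeVerts X` is a component of its own. -/
def edgeComp (X : Set (Sym2 V)) (v : V) : (SimpleGraph.fromEdgeSet X).ConnectedComponent :=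
  (SimpleGraph.fromEdgeSet X).connectedComponentMk v

/-- The components of the graph induced by an edge set, that is, the components of the spanning
subgraph that contain an edge. -/
def edgeComps (X : Set (Sym2 V)) : Set (SimpleGraph.fromEdgeSet X).ConnectedComponent :=
  edgeComp X '' edgeVerts X

/-- The edges of `X` in the component `c`. -/
def compEdges (X : Set (Sym2 V)) (c : (SimpleGraph.fromEdgeSet X).ConnectedComponent) :
    Set (Sym2 V) :=
  {e ∈ X | ∃ v ∈ e, edgeComp X v = c}

lemma boundaryVerts_eq_inter (X Y : Set (Sym2 V)) :
    boundaryVerts X Y = edgeVerts X ∩ edgeVerts Y :=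
  rfl

lemma boundaryVerts_comm (X Y : Set (Sym2 V)) : boundaryVerts X Y = boundaryVerts Y X :=
  Set.inter_comm _ _

lemma edgeVerts_union (X Y : Set (Sym2 V)) : edgeVerts (X ∪ Y) = edgeVerts X ∪ edgeVerts Y := by
  ext v
  simp only [edgeVerts, Set.mem_union, Set.mem_ofPred_eq, or_and_right, exists_or]

lemma edgeVerts_edgeSet (G : SimpleGraph V) : edgeVerts G.edgeSet = G.support := by
  ext v
  constructor
  · rintro ⟨e, he, hv⟩
    obtain ⟨w, rfl⟩ := Sym2.mem_iff_exists.1 hv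
    exact ⟨w, he⟩
  · rintro ⟨w, hw⟩
    exact ⟨s(v, w), hw, Sym2.mem_mk_left v w⟩

lemma support_fromEdgeSet_subset (X : Set (Sym2 V)) :
    (SimpleGraph.fromEdgeSet X).support ⊆ edgeVerts X := by
  rintro v ⟨w, hvw⟩
  exact ⟨s(v, w), ((SimpleGraph.fromEdgeSet_adj X).1 hvw).1, Sym2.mem_mk_left v w⟩

lemma ncard_le_choose_ncard_edgeVerts [Finite V] {G : SimpleGraph V} (hX : X ⊆ G.edgeSet) :
    X.ncard ≤ (edgeVerts X).ncard.choose 2 := by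
  have := Fintype.ofFinite V
  rw [Set.ncard_eq_toFinset_card' (edgeVerts X), ← Sym2.card_image_offDiag,
    ← Set.ncard_coe_finset]
  refine Set.ncard_le_ncard (fun e => ?_) (Set.toFinite _)
  induction e with
  | _ a b =>
    intro he
    have hab : a ≠ b := G.ne_of_adj (hX he)
    have ha : a ∈ edgeVerts X := ⟨_, he, Sym2.mem_mk_left a b⟩
    have hb : b ∈ edgeVerts X := ⟨_, he, Sym2.mem_mk_right a b⟩
    exact Finset.mem_coe.2 (Finset.mem_image.2 ⟨(a, b), by simp [hab, ha, hb], rfl⟩)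

lemma two_le_ncard_edgeVerts [Finite V] {G : SimpleGraph V} (hX : X ⊆ G.edgeSet)
    (hne : X.Nonempty) : 2 ≤ (edgeVerts X).ncard := by
  have hpos := hne.ncard_pos
  have hle := ncard_le_choose_ncard_edgeVerts hX
  by_contra! hlt
  rw [Nat.choose_eq_zero_of_lt hlt] at hle
  omega

lemma three_le_ncard_edgeVerts [Finite V] {G : SimpleGraph V} (hX : X ⊆ G.edgeSet)
    (hnt : X.Nontrivial) : 3 ≤ (edgeVerts X).ncard := by
  have htwo := Set.one_lt_ncard_iff_nontrivial.2 hnt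
  have hle := ncard_le_choose_ncard_edgeVerts hX
  by_contra! hlt
  have := Nat.choose_le_choose 2 (Nat.le_of_lt_succ hlt)
  rw [Nat.choose_self] at this
  omega

lemma edgeComp_eq_of_mem {e : Sym2 V} (he : e ∈ X) {u v : V} (hu : u ∈ e) (hv : v ∈ e) :
    edgeComp X u = edgeComp X v := by
  rcases eq_or_ne u v with rfl | huv
  · rfl
  · obtain rfl : e = s(u, v) := (Sym2.mem_and_mem_iff huv).1 ⟨hu, hv⟩
    exact SimpleGraph.ConnectedComponent.connectedComponentMk_eq_of_adj
      ((SimpleGraph.fromEdgeSet_adj X).2 ⟨he, huv⟩)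

lemma edgeVerts_compEdges (X : Set (Sym2 V))
    (c : (SimpleGraph.fromEdgeSet X).ConnectedComponent) :
    edgeVerts (compEdges X c) = edgeVerts X ∩ edgeComp X ⁻¹' {c} := by
  ext u
  constructor
  · rintro ⟨e, ⟨he, v, hv, hvc⟩, hu⟩
    exact ⟨⟨e, he, hu⟩, (edgeComp_eq_of_mem he hu hv).trans hvc⟩
  · rintro ⟨⟨e, he, hu⟩, huc⟩
    exact ⟨e, ⟨he, u, hu, huc⟩, hu⟩

lemma edgeVerts_diff_compEdges (X : Set (Sym2 V))
    (c : (SimpleGraph.fromEdgeSet X).ConnectedComponent) :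
    edgeVerts (X \ compEdges X c) = edgeVerts X \ edgeComp X ⁻¹' {c} := by
  ext u
  constructor
  · rintro ⟨e, ⟨he, hec⟩, hu⟩
    exact ⟨⟨e, he, hu⟩, fun huc => hec ⟨he, u, hu, huc⟩⟩
  · rintro ⟨⟨e, he, hu⟩, huc⟩
    exact ⟨e, ⟨he, fun ⟨_, v, hv, hvc⟩ => huc ((edgeComp_eq_of_mem he hu hv).trans hvc)⟩, hu⟩

lemma compEdges_subset (X : Set (Sym2 V)) (c : (SimpleGraph.fromEdgeSet X).ConnectedComponent) :
    compEdges X c ⊆ X :=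
  Set.sep_subset _ _

lemma compEdges_nonempty {v : V} (hv : v ∈ edgeVerts X) :
    (compEdges X (edgeComp X v)).Nonempty := by
  obtain ⟨e, he, hve⟩ := hv
  exact ⟨e, he, v, hve, rfl⟩

lemma ncard_le_ncard_edgeComps [Finite V] (h : ∀ c, (compEdges X c).Subsingleton) :
    X.ncard ≤ (edgeComps X).ncard := by
  refine Set.ncard_le_ncard_of_injOn (fun e => edgeComp X e.out.1)
    (fun e he => ⟨_, ⟨e, he, e.out_fst_mem⟩, rfl⟩) (fun e he f hf hef => ?_) (Set.toFinite _)
  exact h (edgeComp X e.out.1) ⟨he, _, e.out_fst_mem, rfl⟩ ⟨hf, _, f.out_fst_mem, hef.symm⟩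

lemma edgeComps_nonempty (hX : X.Nonempty) : (edgeComps X).Nonempty := by
  obtain ⟨e, he⟩ := hX
  exact ⟨_, _, ⟨e, he, e.out_fst_mem⟩, rfl⟩

lemma edgeVerts_subset_or_subset {G : SimpleGraph V} (hU : X ∪ Y = G.edgeSet)
    (hconn : (G.induce (boundaryVerts X Y)ᶜ).Preconnected) :
    edgeVerts X ⊆ edgeVerts Y ∨ edgeVerts Y ⊆ edgeVerts X := by
  by_contra! hcon
  obtain ⟨hX, hY⟩ := hcon
  obtain ⟨u, huX, huY⟩ := Set.not_subset.1 hX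
  obtain ⟨w, -, hwX⟩ := Set.not_subset.1 hY
  have hwalk {a b : ((boundaryVerts X Y)ᶜ : Set V)} (W : (G.induce _).Walk a b) :
      a.1 ∈ edgeVerts X → b.1 ∈ edgeVerts X := by
    induction W with
    | nil => exact id
    | @cons a b _ hab _ ih =>
      intro ha
      have hmem : s(a.1, b.1) ∈ X ∪ Y := hU ▸ hab
      have hnot : s(a.1, b.1) ∉ Y := fun h => a.2 ⟨ha, _, h, Sym2.mem_mk_left _ _⟩
      exact ih ⟨_, hmem.resolve_right hnot, Sym2.mem_mk_right _ _⟩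
  obtain ⟨W⟩ := hconn ⟨u, fun h => huY h.2⟩ ⟨w, fun h => hwX h.1⟩
  exact hwX (hwalk W huX)

end Components

namespace IsCycleMatroidOf

variable {V : Type*} [Finite V] {G : SimpleGraph V} {M : Matroid (Sym2 V)} {X Y : Set (Sym2 V)}

lemma mRk_add_ncard_edgeComps (hM : IsCycleMatroidOf M G) (hX : X ⊆ G.edgeSet) :
    mRk M X + (edgeComps X).ncard = (edgeVerts X).ncard := by
  have hloopless : Disjoint X Sym2.diagSet :=
    Set.subset_compl_iff_disjoint_right.1 (hX.trans G.edgeSet_subset_compl_diagSet)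
  have hrank := finrank_span_incVec_add_card_connectedComponent (SimpleGraph.fromEdgeSet X)
  rw [SimpleGraph.edgeSet_fromEdgeSet, hloopless.sdiff_eq_left,
    ← hM.mRk_eq_finrank_span hX (Set.toFinite X),
    card_connectedComponent_eq (support_fromEdgeSet_subset X)] at hrank
  have hcompl := Set.ncard_add_ncard_compl (edgeVerts X)
  change _ + ((edgeComps X).ncard + _) = _ at hrank
  omega

lemma mRk_edgeSet_add_one [Nonempty V] (hM : IsCycleMatroidOf M G) (hG : G.Preconnected) :
    mRk M G.edgeSet + 1 = Nat.card V := by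
  have hrank := finrank_span_incVec_add_card_connectedComponent G
  have := hG.subsingleton_connectedComponent
  have : Nonempty G.ConnectedComponent := ⟨G.connectedComponentMk (Classical.arbitrary V)⟩
  rwa [← hM.mRk_eq_finrank_span subset_rfl (Set.toFinite _), Nat.card_unique] at hrank

/-- The connectivity `r(X) + r(Y) - r(M)` is the cyclomatic number of the bipartite multigraph
that joins the components of the two sides through the boundary vertices. -/
lemma mRk_add_mRk_add_ncard_edgeComps [Nontrivial V] (hM : IsCycleMatroidOf M G)
    (hG : G.Preconnected) (hU : X ∪ Y = G.edgeSet) :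
    mRk M X + mRk M Y + ((edgeComps X).ncard + (edgeComps Y).ncard) =
      mRk M M.E + 1 + (boundaryVerts X Y).ncard := by
  have hX := hM.mRk_add_ncard_edgeComps (Set.subset_union_left.trans_eq hU)
  have hY := hM.mRk_add_ncard_edgeComps (Set.subset_union_right.trans_eq hU)
  have hE := hM.mRk_edgeSet_add_one hG
  have hverts := Set.ncard_union_add_ncard_inter (edgeVerts X) (edgeVerts Y)
  rw [← edgeVerts_union, hU, edgeVerts_edgeSet, hG.support_eq_univ, Set.ncard_univ,
    ← boundaryVerts_eq_inter] at hverts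
  rw [hM.1]
  omega

lemma mKSep_iff [Nontrivial V] (hM : IsCycleMatroidOf M G) (hG : G.Preconnected) {k : ℕ} :
    mKSep M k X Y ↔ Disjoint X Y ∧ X ∪ Y = G.edgeSet ∧ k ≤ X.ncard ∧ k ≤ Y.ncard ∧
      (boundaryVerts X Y).ncard + 2 ≤ (edgeComps X).ncard + (edgeComps Y).ncard + k := by
  rw [mKSep]
  nth_rw 1 [hM.1]
  refine and_congr_right fun _ => and_congr_right fun hU =>
    and_congr_right fun _ => and_congr_right fun _ => ?_
  have := hM.mRk_add_mRk_add_ncard_edgeComps hG hU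
  omega

end IsCycleMatroidOf

section TrianglesAndStars

variable {V : Type*} {G : SimpleGraph V} {X : Set (Sym2 V)}

lemma ncard_incidenceSet_eq (G : SimpleGraph V) (v : V) :
    (G.incidenceSet v).ncard = (G.neighborSet v).ncard :=
  Nat.card_congr (G.incidenceSetEquivNeighborSet v)

lemma ncard_triple_le {α : Type*} (a b c : α) : ({a, b, c} : Set α).ncard ≤ 3 := by
  simpa [← Set.ncard_coe_finset] using Finset.card_le_three (a := a) (b := b) (c := c)

lemma IsTriangleEdgeSet.ncard_le_three : IsTriangleEdgeSet G X → X.ncard ≤ 3 := by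
  rintro ⟨a, b, c, -, -, -, -, -, -, rfl⟩
  exact ncard_triple_le _ _ _

lemma IsDegree3Star.ncard_eq_three : IsDegree3Star G X → X.ncard = 3 := by
  rintro ⟨v, hv, rfl⟩
  exact (ncard_incidenceSet_eq G v).trans hv

lemma isTriangleEdgeSet_of_ncard_edgeVerts_eq_three (hXG : X ⊆ G.edgeSet)
    (hX : X.ncard = 3) (hverts : (edgeVerts X).ncard = 3) : IsTriangleEdgeSet G X := by
  obtain ⟨a, b, c, hab, hac, hbc, habc⟩ := Set.ncard_eq_three.1 hverts
  have hsub : X ⊆ {s(a, b), s(b, c), s(a, c)} := by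
    intro e he
    induction e with
    | _ x y =>
      have hxy : x ≠ y := G.ne_of_adj (hXG he)
      have hx : x ∈ ({a, b, c} : Set V) := habc ▸ ⟨_, he, Sym2.mem_mk_left x y⟩
      have hy : y ∈ ({a, b, c} : Set V) := habc ▸ ⟨_, he, Sym2.mem_mk_right x y⟩
      rcases hx with rfl | rfl | rfl <;> rcases hy with rfl | rfl | rfl <;>
        simp_all [Sym2.eq_swap]
  have hXeq := Set.eq_of_subset_of_ncard_le hsub (hX ▸ ncard_triple_le _ _ _)
  have hadj {u v : V} (huv : s(u, v) ∈ ({s(a, b), s(b, c), s(a, c)} : Set (Sym2 V))) :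
      G.Adj u v := hXG (hXeq ▸ huv)
  exact ⟨a, b, c, hab, hac, hbc, hadj (by simp), hadj (by simp), hadj (by simp), hXeq⟩

end TrianglesAndStars

namespace GraphThreeConnected

variable {V : Type*} {G : SimpleGraph V} {X Y : Set (Sym2 V)}

lemma finite (h3 : GraphThreeConnected G) : Finite V :=
  Nat.finite_of_card_ne_zero (Nat.ne_zero_of_lt h3.1)

lemma nontrivial (h3 : GraphThreeConnected G) : Nontrivial V := by
  have := h3.finite
  exact Finite.one_lt_card_iff_nontrivial.1 (by have := h3.1; omega)

lemma preconnected (h3 : GraphThreeConnected G) : G.Preconnected := by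
  intro u v
  have hconn := h3.2 ∅ (by simp)
  exact (hconn.preconnected ⟨u, by simp⟩ ⟨v, by simp⟩).map (SimpleGraph.Embedding.induce _).toHom

lemma three_le_ncard_neighborSet (h3 : GraphThreeConnected G) (v : V) :
    3 ≤ (G.neighborSet v).ncard := by
  by_contra! hlt
  obtain ⟨w, hw⟩ : ∃ w, w ∉ insert v (G.neighborSet v) := by
    by_contra! hall
    have hle := Set.ncard_insert_le v (G.neighborSet v)
    rw [Set.eq_univ_of_forall hall, Set.ncard_univ] at hle
    have := h3.1
    omega
  rw [Set.mem_insert_iff, not_or] at hw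
  obtain ⟨W⟩ := (h3.2 _ hlt).preconnected ⟨v, G.notMem_neighborSet_self⟩ ⟨w, hw.2⟩
  cases W with
  | nil => exact hw.1 rfl
  | @cons _ b _ hvb _ => exact b.2 hvb

lemma le_ncard_boundaryVerts (h3 : GraphThreeConnected G) (hU : X ∪ Y = G.edgeSet) {n : ℕ}
    (hn : n ≤ 3) (hX : n ≤ (edgeVerts X).ncard) (hY : n ≤ (edgeVerts Y).ncard) :
    n ≤ (boundaryVerts X Y).ncard := by
  by_contra! hlt
  have hconn := (h3.2 _ (hlt.trans_le hn)).preconnected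
  rw [boundaryVerts_eq_inter] at hlt
  rcases edgeVerts_subset_or_subset hU hconn with hsub | hsub
  · rw [Set.inter_eq_left.2 hsub] at hlt
    omega
  · rw [Set.inter_eq_right.2 hsub] at hlt
    omega

lemma three_le_ncard_boundaryVerts (h3 : GraphThreeConnected G) (hU : X ∪ Y = G.edgeSet)
    (hX : X.Nontrivial) (hY : Y.Nontrivial) : 3 ≤ (boundaryVerts X Y).ncard := by
  have := h3.finite
  exact h3.le_ncard_boundaryVerts hU le_rfl
    (three_le_ncard_edgeVerts (Set.subset_union_left.trans_eq hU) hX)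
    (three_le_ncard_edgeVerts (Set.subset_union_right.trans_eq hU) hY)

lemma le_ncard_boundaryVerts_inter_edgeComp (h3 : GraphThreeConnected G)
    (hU : X ∪ Y = G.edgeSet) {c : (SimpleGraph.fromEdgeSet X).ConnectedComponent} {n : ℕ}
    (hn : n ≤ 3) (hc : n ≤ (edgeVerts (compEdges X c)).ncard) (hY : n ≤ (edgeVerts Y).ncard) :
    n ≤ (boundaryVerts X Y ∩ edgeComp X ⁻¹' {c}).ncard := by
  have := h3.finite
  have hU' : compEdges X c ∪ (X \ compEdges X c ∪ Y) = G.edgeSet := by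
    rw [← Set.union_assoc, Set.union_sdiff_cancel (compEdges_subset X c), hU]
  have hB : boundaryVerts (compEdges X c) (X \ compEdges X c ∪ Y) =
      boundaryVerts X Y ∩ edgeComp X ⁻¹' {c} := by
    rw [boundaryVerts_eq_inter, boundaryVerts_eq_inter, edgeVerts_union, edgeVerts_compEdges,
      edgeVerts_diff_compEdges]
    grind
  rw [← hB]
  refine h3.le_ncard_boundaryVerts hU' hn hc (hY.trans (Set.ncard_le_ncard ?_))
  rw [edgeVerts_union]
  exact Set.subset_union_right

lemma two_le_ncard_boundaryVerts_inter_edgeComp (h3 : GraphThreeConnected G)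
    (hU : X ∪ Y = G.edgeSet) {c : (SimpleGraph.fromEdgeSet X).ConnectedComponent}
    (hc : (compEdges X c).Nonempty) (hY : Y.Nonempty) :
    2 ≤ (boundaryVerts X Y ∩ edgeComp X ⁻¹' {c}).ncard := by
  have := h3.finite
  have hXG : X ⊆ G.edgeSet := Set.subset_union_left.trans_eq hU
  exact h3.le_ncard_boundaryVerts_inter_edgeComp hU (by norm_num)
    (two_le_ncard_edgeVerts ((compEdges_subset X c).trans hXG) hc)
    (two_le_ncard_edgeVerts (Set.subset_union_right.trans_eq hU) hY)

lemma three_le_ncard_boundaryVerts_inter_edgeComp (h3 : GraphThreeConnected G)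
    (hU : X ∪ Y = G.edgeSet) {c : (SimpleGraph.fromEdgeSet X).ConnectedComponent}
    (hc : (compEdges X c).Nontrivial) (hY : Y.Nontrivial) :
    3 ≤ (boundaryVerts X Y ∩ edgeComp X ⁻¹' {c}).ncard := by
  have := h3.finite
  have hXG : X ⊆ G.edgeSet := Set.subset_union_left.trans_eq hU
  exact h3.le_ncard_boundaryVerts_inter_edgeComp hU le_rfl
    (three_le_ncard_edgeVerts ((compEdges_subset X c).trans hXG) hc)
    (three_le_ncard_edgeVerts (Set.subset_union_right.trans_eq hU) hY)

lemma edgeComps_left_eq_image_boundaryVerts (h3 : GraphThreeConnected G)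
    (hU : X ∪ Y = G.edgeSet) (hY : Y.Nonempty) : edgeComps X = edgeComp X '' boundaryVerts X Y := by
  refine subset_antisymm ?_ (Set.image_mono Set.inter_subset_left)
  rintro _ ⟨v, hv, rfl⟩
  have h2 := h3.two_le_ncard_boundaryVerts_inter_edgeComp hU (compEdges_nonempty hv) hY
  obtain ⟨w, hw, hwv⟩ := Set.nonempty_of_ncard_ne_zero (Nat.ne_zero_of_lt h2)
  exact ⟨w, hw, hwv⟩

lemma edgeComps_right_eq_image_boundaryVerts (h3 : GraphThreeConnected G)
    (hU : X ∪ Y = G.edgeSet) (hX : X.Nonempty) : edgeComps Y = edgeComp Y '' boundaryVerts X Y := by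
  rw [boundaryVerts_comm]
  exact h3.edgeComps_left_eq_image_boundaryVerts ((Set.union_comm Y X).trans hU) hX

lemma two_mul_ncard_edgeComps_le (h3 : GraphThreeConnected G) (hU : X ∪ Y = G.edgeSet)
    (hY : Y.Nonempty) : 2 * (edgeComps X).ncard ≤ (boundaryVerts X Y).ncard := by
  have := h3.finite
  rw [h3.edgeComps_left_eq_image_boundaryVerts hU hY]
  exact mul_ncard_image_le (Set.toFinite _) fun v hv =>
    h3.two_le_ncard_boundaryVerts_inter_edgeComp hU (compEdges_nonempty hv.1) hY

lemma incident_nontrivial_or_incident_nontrivial (h3 : GraphThreeConnected G)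
    (hU : X ∪ Y = G.edgeSet) (v : V) :
    {e ∈ X | v ∈ e}.Nontrivial ∨ {e ∈ Y | v ∈ e}.Nontrivial := by
  have := h3.finite
  by_contra! hcon
  have hX := Set.ncard_le_one_iff_subsingleton.2 hcon.1
  have hY := Set.ncard_le_one_iff_subsingleton.2 hcon.2
  have hsplit : G.incidenceSet v = {e ∈ X | v ∈ e} ∪ {e ∈ Y | v ∈ e} := by
    rw [SimpleGraph.incidenceSet, ← hU]
    exact Set.sep_union
  have hle := Set.ncard_union_le {e ∈ X | v ∈ e} {e ∈ Y | v ∈ e}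
  rw [← hsplit, ncard_incidenceSet_eq] at hle
  have := h3.three_le_ncard_neighborSet v
  omega

lemma branchedBipartite (h3 : GraphThreeConnected G) (hU : X ∪ Y = G.edgeSet)
    (hX : X.Nontrivial) (hY : Y.Nontrivial) :
    BranchedBipartite (boundaryVerts X Y) (edgeComp X) (edgeComp Y) := by
  have := h3.finite
  have hU' : Y ∪ X = G.edgeSet := (Set.union_comm Y X).trans hU
  have hstar {Z : Set (Sym2 V)} {v : V} :
      {e ∈ Z | v ∈ e} ⊆ compEdges Z (edgeComp Z v) := fun _ he => ⟨he.1, v, he.2, rfl⟩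
  refine ⟨Set.toFinite _, fun v hv => ?_, fun v hv => ?_, fun v _ => ?_⟩
  · exact h3.two_le_ncard_boundaryVerts_inter_edgeComp hU (compEdges_nonempty hv.1) hY.nonempty
  · rw [boundaryVerts_comm]
    exact h3.two_le_ncard_boundaryVerts_inter_edgeComp hU' (compEdges_nonempty hv.2) hX.nonempty
  · refine (h3.incident_nontrivial_or_incident_nontrivial hU v).imp (fun hv => ?_) (fun hv => ?_)
    · exact h3.three_le_ncard_boundaryVerts_inter_edgeComp hU (hv.mono hstar) hY
    · rw [boundaryVerts_comm]
      exact h3.three_le_ncard_boundaryVerts_inter_edgeComp hU' (hv.mono hstar) hX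

lemma ncard_edgeComps_add_ncard_edgeComps_lt (h3 : GraphThreeConnected G)
    (hU : X ∪ Y = G.edgeSet) (hX : X.Nontrivial) (hY : Y.Nontrivial) :
    (edgeComps X).ncard + (edgeComps Y).ncard < (boundaryVerts X Y).ncard := by
  have hB : (boundaryVerts X Y).Nonempty := Set.nonempty_of_ncard_ne_zero
    (Nat.ne_zero_of_lt (h3.three_le_ncard_boundaryVerts hU hX hY))
  rw [h3.edgeComps_left_eq_image_boundaryVerts hU hY.nonempty,
    h3.edgeComps_right_eq_image_boundaryVerts hU hX.nonempty]
  exact (h3.branchedBipartite hU hX hY).ncard_image_add_ncard_image_lt hB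

lemma ncard_le_ncard_edgeComps_of_fiber_lt_three (h3 : GraphThreeConnected G)
    (hU : X ∪ Y = G.edgeSet) (hY : Y.Nontrivial)
    (h : ∀ v ∈ boundaryVerts X Y, (boundaryVerts X Y ∩ edgeComp X ⁻¹' {edgeComp X v}).ncard < 3) :
    X.ncard ≤ (edgeComps X).ncard := by
  have := h3.finite
  refine ncard_le_ncard_edgeComps fun c => ?_
  by_contra! hc
  have hle := h3.three_le_ncard_boundaryVerts_inter_edgeComp hU hc hY
  obtain ⟨v, hv, rfl⟩ := Set.nonempty_of_ncard_ne_zero (Nat.ne_zero_of_lt hle)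
  exact (h v hv).not_ge hle

lemma two_le_ncard_boundaryVerts_inter_inter (h3 : GraphThreeConnected G) (hU : X ∪ Y = G.edgeSet)
    {c : (SimpleGraph.fromEdgeSet X).ConnectedComponent}
    {d : (SimpleGraph.fromEdgeSet Y).ConnectedComponent}
    (hc : (compEdges X c).Nonempty) (hd : (compEdges Y d).Nonempty)
    (hcover : ∀ v ∈ boundaryVerts X Y, edgeComp X v = c ∨ edgeComp Y v = d) :
    2 ≤ (boundaryVerts X Y ∩ edgeComp X ⁻¹' {c} ∩ edgeComp Y ⁻¹' {d}).ncard := by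
  have := h3.finite
  have hXc := compEdges_subset X c
  have hYd := compEdges_subset Y d
  -- Exchange the component `d` of `Y` for the components of `X` other than `c`.
  set P := compEdges X c ∪ Y \ compEdges Y d with hP
  set Q := X \ compEdges X c ∪ compEdges Y d with hQ
  have hPQ : P ∪ Q = G.edgeSet := by
    rw [← hU]
    grind
  have hB : boundaryVerts P Q =
      boundaryVerts X Y ∩ edgeComp X ⁻¹' {c} ∩ edgeComp Y ⁻¹' {d} := by
    rw [boundaryVerts_eq_inter] at hcover ⊢
    rw [boundaryVerts_eq_inter, hP, hQ]
    simp only [edgeVerts_union, edgeVerts_compEdges, edgeVerts_diff_compEdges]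
    grind
  rw [← hB]
  exact h3.le_ncard_boundaryVerts hPQ (by norm_num)
    (two_le_ncard_edgeVerts (Set.subset_union_left.trans_eq hPQ) (hc.mono Set.subset_union_left))
    (two_le_ncard_edgeVerts (Set.subset_union_right.trans_eq hPQ) (hd.mono Set.subset_union_right))

lemma ncard_le_three_of_fiber_lt_three (h3 : GraphThreeConnected G)
    (hU : X ∪ Y = G.edgeSet) (hX : X.Nontrivial) (hY : Y.Nontrivial)
    (hle : (boundaryVerts X Y).ncard ≤ (edgeComps X).ncard + (edgeComps Y).ncard + 1)
    (hlt : ∀ v ∈ boundaryVerts X Y,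
      (boundaryVerts X Y ∩ edgeComp X ⁻¹' {edgeComp X v}).ncard < 3) : X.ncard ≤ 3 := by
  refine (h3.ncard_le_ncard_edgeComps_of_fiber_lt_three hU hY hlt).trans ?_
  have hXimage := h3.edgeComps_left_eq_image_boundaryVerts hU hY.nonempty
  rw [hXimage, h3.edgeComps_right_eq_image_boundaryVerts hU hX.nonempty] at hle
  rw [hXimage]
  exact (h3.branchedBipartite hU hX hY).ncard_image_left_le_three hle hlt

lemma ncard_boundaryVerts_le_three_of_three_le_fiber (h3 : GraphThreeConnected G)
    (hU : X ∪ Y = G.edgeSet) (hX : X.Nontrivial) (hY : Y.Nontrivial)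
    (hle : (boundaryVerts X Y).ncard ≤ (edgeComps X).ncard + (edgeComps Y).ncard + 1)
    {x y : V} (hx : x ∈ boundaryVerts X Y) (hy : y ∈ boundaryVerts X Y)
    (hx3 : 3 ≤ (boundaryVerts X Y ∩ edgeComp X ⁻¹' {edgeComp X x}).ncard)
    (hy3 : 3 ≤ (boundaryVerts X Y ∩ edgeComp Y ⁻¹' {edgeComp Y y}).ncard) :
    (boundaryVerts X Y).ncard ≤ 3 := by
  by_contra! hlt
  rw [h3.edgeComps_left_eq_image_boundaryVerts hU hY.nonempty,
    h3.edgeComps_right_eq_image_boundaryVerts hU hX.nonempty] at hle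
  obtain ⟨hcover, hone⟩ :=
    (h3.branchedBipartite hU hX hY).eq_or_eq_and_ncard_inter_le_one hle hlt hx hy hx3 hy3
  have htwo := h3.two_le_ncard_boundaryVerts_inter_inter hU
    (compEdges_nonempty hx.1) (compEdges_nonempty hy.2) hcover
  omega

lemma ncard_le_three_or_ncard_boundaryVerts_le_three (h3 : GraphThreeConnected G)
    (hU : X ∪ Y = G.edgeSet) (hX : X.Nontrivial) (hY : Y.Nontrivial)
    (hle : (boundaryVerts X Y).ncard ≤ (edgeComps X).ncard + (edgeComps Y).ncard + 1) :
    X.ncard ≤ 3 ∨ Y.ncard ≤ 3 ∨ (boundaryVerts X Y).ncard ≤ 3 := by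
  by_cases hXlt : ∀ v ∈ boundaryVerts X Y,
      (boundaryVerts X Y ∩ edgeComp X ⁻¹' {edgeComp X v}).ncard < 3
  · exact .inl (h3.ncard_le_three_of_fiber_lt_three hU hX hY hle hXlt)
  by_cases hYlt : ∀ v ∈ boundaryVerts X Y,
      (boundaryVerts X Y ∩ edgeComp Y ⁻¹' {edgeComp Y v}).ncard < 3
  · rw [boundaryVerts_comm] at hle hYlt
    rw [add_comm (edgeComps X).ncard] at hle
    exact .inr (.inl (h3.ncard_le_three_of_fiber_lt_three ((Set.union_comm Y X).trans hU) hY hX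
      hle hYlt))
  push Not at hXlt hYlt
  obtain ⟨x, hx, hx3⟩ := hXlt
  obtain ⟨y, hy, hy3⟩ := hYlt
  exact .inr (.inr (h3.ncard_boundaryVerts_le_three_of_three_le_fiber hU hX hY hle hx hy hx3 hy3))

lemma isTriangleEdgeSet_or_isDegree3Star (h3 : GraphThreeConnected G) (hU : X ∪ Y = G.edgeSet)
    (hX : X.ncard = 3) (hB : (boundaryVerts X Y).ncard = 3) :
    IsTriangleEdgeSet G X ∨ IsDegree3Star G X := by
  have := h3.finite
  have hXG : X ⊆ G.edgeSet := Set.subset_union_left.trans_eq hU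
  by_cases hsub : edgeVerts X ⊆ edgeVerts Y
  · rw [boundaryVerts_eq_inter, Set.inter_eq_left.2 hsub] at hB
    exact .inl (isTriangleEdgeSet_of_ncard_edgeVerts_eq_three hXG hX hB)
  · obtain ⟨v, -, hvY⟩ := Set.not_subset.1 hsub
    have hstar : G.incidenceSet v ⊆ X := fun e ⟨he, hve⟩ =>
      (hU.symm.subset he).resolve_right fun heY => hvY ⟨e, heY, hve⟩
    have hdeg := (h3.three_le_ncard_neighborSet v).trans_eq (ncard_incidenceSet_eq G v).symm
    have hXeq := Set.eq_of_subset_of_ncard_le hstar (hX.trans_le hdeg)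
    exact .inr ⟨v, by rw [← ncard_incidenceSet_eq, hXeq, hX], hXeq.symm⟩

variable {M : Matroid (Sym2 V)}

lemma mThreeConnected (h3 : GraphThreeConnected G) (hM : IsCycleMatroidOf M G) :
    mThreeConnected M := by
  have := h3.finite
  have := h3.nontrivial
  constructor
  · intro X Y hsep
    obtain ⟨-, hU, hX, hY, hle⟩ := (hM.mKSep_iff h3.preconnected).1 hsep
    have hXne : X.Nonempty := Set.nonempty_of_ncard_ne_zero (Nat.ne_zero_of_lt hX)
    have hYne : Y.Nonempty := Set.nonempty_of_ncard_ne_zero (Nat.ne_zero_of_lt hY)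
    have hXle := h3.two_mul_ncard_edgeComps_le hU hYne
    have hYle := h3.two_mul_ncard_edgeComps_le ((Set.union_comm Y X).trans hU) hXne
    rw [boundaryVerts_comm] at hYle
    omega
  · intro X Y hsep
    obtain ⟨-, hU, hX, hY, hle⟩ := (hM.mKSep_iff h3.preconnected).1 hsep
    have hlt := h3.ncard_edgeComps_add_ncard_edgeComps_lt hU
      (Set.one_lt_ncard_iff_nontrivial.1 hX) (Set.one_lt_ncard_iff_nontrivial.1 hY)
    omega

lemma min_ncard_eq_three (h3 : GraphThreeConnected G) (hM : IsCycleMatroidOf M G)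
    (h4 : GraphInternally4 G) (hsep : mKSep M 3 X Y) : min X.ncard Y.ncard = 3 := by
  have := h3.finite
  have := h3.nontrivial
  obtain ⟨hD, hU, hX, hY, hle⟩ := (hM.mKSep_iff h3.preconnected).1 hsep
  have hXnt : X.Nontrivial := Set.one_lt_ncard_iff_nontrivial.1 (by omega)
  have hYnt : Y.Nontrivial := Set.one_lt_ncard_iff_nontrivial.1 (by omega)
  suffices X.ncard ≤ 3 ∨ Y.ncard ≤ 3 by omega
  rcases h3.ncard_le_three_or_ncard_boundaryVerts_le_three hU hXnt hYnt (by omega) with h | h | hB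
  · exact .inl h
  · exact .inr h
  have hB3 := hB.antisymm (h3.three_le_ncard_boundaryVerts hU hXnt hYnt)
  rcases le_total X.ncard Y.ncard with hXY | hYX
  · exact .inl (((h4 X Y hD hU hX hXY).2 hB3).elim (·.ncard_le_three) (·.ncard_eq_three.le))
  · rw [boundaryVerts_comm] at hB3
    have hU' : Y ∪ X = G.edgeSet := (Set.union_comm Y X).trans hU
    exact .inr (((h4 Y X hD.symm hU' hY hYX).2 hB3).elim (·.ncard_le_three) (·.ncard_eq_three.le))

lemma mKSep_three_of_ncard_boundaryVerts_le_three (h3 : GraphThreeConnected G)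
    (hM : IsCycleMatroidOf M G) (hD : Disjoint X Y) (hU : X ∪ Y = G.edgeSet)
    (hX : 3 ≤ X.ncard) (hY : 3 ≤ Y.ncard)
    (hB : (boundaryVerts X Y).ncard ≤ 3) : mKSep M 3 X Y := by
  have := h3.finite
  have := h3.nontrivial
  have hXne : X.Nonempty := Set.nonempty_of_ncard_ne_zero (Nat.ne_zero_of_lt hX)
  have hYne : Y.Nonempty := Set.nonempty_of_ncard_ne_zero (Nat.ne_zero_of_lt hY)
  have hXpos := (edgeComps_nonempty hXne).ncard_pos
  have hYpos := (edgeComps_nonempty hYne).ncard_pos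
  exact (hM.mKSep_iff h3.preconnected).2 ⟨hD, hU, hX, hY, by omega⟩

end GraphThreeConnected

/-- A simple 3-connected graph is internally 4-connected if and only if its cycle matroid
is an internally 4-connected matroid. -/
theorem statement11 {V : Type*} [Fintype V] (G : SimpleGraph V)
    (h3 : GraphThreeConnected G)
    (M : Matroid (Sym2 V)) (hM : IsCycleMatroidOf M G) :
    GraphInternally4 G ↔ mInternally4 M := by
  constructor
  · intro h4
    exact ⟨h3.mThreeConnected hM, fun X Y hsep => h3.min_ncard_eq_three hM h4 hsep⟩
  · rintro ⟨-, h4⟩ X Y hD hU hX hXY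
    have hY : 3 ≤ Y.ncard := hX.trans hXY
    have hXnt : X.Nontrivial := Set.one_lt_ncard_iff_nontrivial.1 (by omega)
    have hYnt : Y.Nontrivial := Set.one_lt_ncard_iff_nontrivial.1 (by omega)
    refine ⟨h3.three_le_ncard_boundaryVerts hU hXnt hYnt, fun hB => ?_⟩
    have hmin := h4 X Y (h3.mKSep_three_of_ncard_boundaryVerts_le_three hM hD hU hX hY hB.le)
    rw [min_eq_left hXY] at hmin
    exact h3.isTriangleEdgeSet_or_isDegree3Star hU hmin hB
end

section
/- The triangular Möbius matroid Δ_{n+1} with the element γ deleted is isomorphic to the dual of the cycle matroid of the cubic Möbius ladder on 2n vertices: Δ_{n+1} \ γ ≅ M*(CML_{2n}). -/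
open Set Matroid
open scoped Classical

/-- The graph `G⁺_{n+2}`: an `n`-cycle on `Sum.inl '' (ZMod n)`, with `x = inl 0` and
`y = inl 1` adjacent on the cycle, together with two vertices `u = inr false` and
`w = inr true` adjacent to every cycle vertex, and the edge `γ = uw`. -/
def gplus (n : ℕ) : SimpleGraph (ZMod n ⊕ Bool) :=
  SimpleGraph.fromRel (fun a b =>
    (∃ i : ZMod n, a = Sum.inl i ∧ b = Sum.inl (i + 1)) ∨
    (∃ i : ZMod n, a = Sum.inl i ∧ (b = Sum.inr true ∨ b = Sum.inr false)) ∨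
    (a = Sum.inr false ∧ b = Sum.inr true))

/-- The ground set of the triangular Möbius matroid `Δ_{n+1}`: the edges of `G⁺_{n+2}`
other than `xy`, together with one new element. -/
def deltaGround (n : ℕ) : Set (Sym2 (ZMod n ⊕ Bool) ⊕ Unit) :=
  (Sum.inl '' ((gplus n).edgeSet \ {s(Sum.inl 0, Sum.inl 1)})) ∪ {Sum.inr ()}

/-- The binary representation of `Δ_{n+1}`: edges of `G⁺_{n+2}` get their GF(2) incidence
vectors, and the new element is represented by `incVec (wx) + incVec (uy)`, so that it forms
a circuit with `{wx, uy}` (equivalently with `{ux, wy}`). -/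
noncomputable def deltaVec (n : ℕ) : Sym2 (ZMod n ⊕ Bool) ⊕ Unit → ((ZMod n ⊕ Bool) → ZMod 2) :=
  Sum.elim incVec
    (fun _ => incVec s((Sum.inr true : ZMod n ⊕ Bool), Sum.inl 0) +
      incVec s((Sum.inr false : ZMod n ⊕ Bool), Sum.inl 1))

/-!
Let `x` and `y` be finite families of vectors on the same index set such that the linear relations
among the `x i` are exactly the families `i ↦ φ (y i)` with `φ` a functional. Then `x` is
independent on `J` iff the `y i` with `i` outside `J` span all the `y i`, so `x` and `y` represent
dual matroids.

For the cycle matroid of a graph, the families `i ↦ φ (y i)` are the cuts: `φ` is a potential on the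
vertices, and an edge receives the difference of the potential between its ends. Pair the spoke of
`Δ_{n+1}` at the rim vertex `i + 1` and the hub `b` with the edge joining the ends of the rungs `i`
and `i + 1` on side `b` of the ladder, and the rim element at `{i, i + 1}` with the rung `i`. The
relation at a rim vertex then says that the values around a quadrangle of the ladder add up to zero.
The relation at a hub says that the values along one side add up to the value on the rung `0`; the
new element `xy` meets both hubs because the side closes up only after a twist.

Conversely, the hub relations make the values on the rails add up to zero around the Hamiltonian
cycle formed by the rails, so these values come from a potential. It gives the right value on the
rung `0` by a hub relation, and then on every rung, one quadrangle after another.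
-/

section LinearAlgebra

lemma linearIndepOn_iff_sum_eq_zero {R ι V : Type*} [Ring R] [AddCommGroup V] [Module R V]
    [Fintype ι] {x : ι → V} {J : Set ι} :
    LinearIndepOn R x J ↔
      ∀ a : ι → R, (∀ i ∉ J, a i = 0) → ∑ i, a i • x i = 0 → a = 0 := by
  rw [linearIndepOn_iff]
  refine Finsupp.equivFunOnFinite.forall_congr fun {a} => ?_
  simp [Finsupp.mem_supported', Finsupp.linearCombination_apply, Finsupp.sum_fintype,
    DFunLike.ext_iff, funext_iff]

theorem linearIndepOn_iff_forall_mem_span_compl {K ι V W : Type*} [Field K] [AddCommGroup V]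
    [Module K V] [AddCommGroup W] [Module K W] [Fintype ι] {x : ι → V} {y : ι → W}
    (hxy : ∀ a : ι → K, ∑ i, a i • x i = 0 ↔ ∃ φ : Module.Dual K W, ∀ i, a i = φ (y i))
    {J : Set ι} :
    LinearIndepOn K x J ↔ ∀ i, y i ∈ Submodule.span K (y '' Jᶜ) := by
  rw [linearIndepOn_iff_sum_eq_zero]
  constructor
  · intro hindep i
    by_contra hi
    obtain ⟨φ, hφi, hφ⟩ := Submodule.exists_le_ker_of_notMem hi
    have hφ_zero : (fun j => φ (y j)) = 0 :=
      hindep _ (fun j hj => hφ (Submodule.subset_span ⟨j, hj, rfl⟩)) ((hxy _).2 ⟨φ, fun _ => rfl⟩)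
    exact hφi (congrFun hφ_zero i)
  · intro hspan a ha hrel
    obtain ⟨φ, hφ⟩ := (hxy a).1 hrel
    have hker : Submodule.span K (y '' Jᶜ) ≤ LinearMap.ker φ := by
      rw [Submodule.span_le, image_subset_iff]
      exact fun j hj => (hφ j).symm.trans (ha j hj)
    exact funext fun i => (hφ i).trans (hker (hspan i))

end LinearAlgebra

section Matroid

variable {α β W : Type*} [AddCommGroup W] [Module (ZMod 2) W]

lemma matroidIso_of_indep_image_iff {ι : Type*} {M : Matroid α} {N : Matroid β} {g : ι → α}
    {f : ι → β} (hg : g.Injective) (hf : f.Injective) (hgM : range g = M.E) (hfN : range f = N.E)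
    (h : ∀ J, M.Indep (g '' J) ↔ N.Indep (f '' J)) : MatroidIso M N := by
  let eM : ι ≃ M.E := (Equiv.ofInjective g hg).trans (Equiv.setCongr hgM)
  let eN : ι ≃ N.E := (Equiv.ofInjective f hf).trans (Equiv.setCongr hfN)
  refine ⟨eM.symm.trans eN, fun I => ?_⟩
  obtain ⟨J, rfl⟩ := eM.surjective.image_surjective I
  convert! h J using 2
  · rw [image_image]; rfl
  · simp only [image_image, Equiv.trans_apply, Equiv.symm_apply_apply]; rfl

namespace IsBinRepOn

variable {M : Matroid α} {E S : Set α} {v : α → W}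

lemma delete (hM : IsBinRepOn M E v) (D : Set α) : IsBinRepOn (mDel M D) (E \ D) v := by
  refine ⟨by rw [mDel, restrict_ground_eq, hM.1], fun I hI => ?_⟩
  rw [mDel, restrict_indep_iff, hM.1, hM.2 I (hI.trans sdiff_subset), and_iff_left hI]

lemma mem_closure_iff_of_indep (hM : IsBinRepOn M E v) (hS : M.Indep S) {e : α} (he : e ∈ E) :
    e ∈ M.closure S ↔ v e ∈ Submodule.span (ZMod 2) (v '' S) := by
  have hSE : S ⊆ E := hM.1 ▸ hS.subset_ground
  have hSv : LinearIndepOn (ZMod 2) v S := (hM.2 S hSE).1 hS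
  rw [hS.mem_closure_iff', hSv.mem_span_iff, hM.1, and_iff_right he,
    hM.2 _ (insert_subset he hSE)]
  rfl

lemma mem_closure_iff (hM : IsBinRepOn M E v) (hS : S ⊆ E) {e : α} (he : e ∈ E) :
    e ∈ M.closure S ↔ v e ∈ Submodule.span (ZMod 2) (v '' S) := by
  obtain ⟨I, hI⟩ := M.exists_isBasis S (hM.1 ▸ hS)
  have hspan : Submodule.span (ZMod 2) (v '' I) = Submodule.span (ZMod 2) (v '' S) := by
    refine le_antisymm (Submodule.span_mono (image_mono hI.subset)) (Submodule.span_le.2 ?_)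
    rintro _ ⟨s, hs, rfl⟩
    exact (hM.mem_closure_iff_of_indep hI.indep (hS hs)).1 (hI.subset_closure hs)
  rw [← hI.closure_eq_closure, hM.mem_closure_iff_of_indep hI.indep he, hspan]

lemma dual_indep_iff (hM : IsBinRepOn M E v) (hS : S ⊆ E) :
    M✶.Indep S ↔ ∀ e ∈ E, v e ∈ Submodule.span (ZMod 2) (v '' (E \ S)) := by
  rw [← coindep_def, coindep_iff_closure_compl_eq_ground (hM.1 ▸ hS), hM.1, subset_antisymm_iff,
    and_iff_right (hM.1 ▸ M.closure_subset_ground _)]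
  exact forall₂_congr fun e he => hM.mem_closure_iff sdiff_subset he

theorem matroidIso_dual {ι U : Type*} [AddCommGroup U] [Module (ZMod 2) U] [Fintype ι]
    {N : Matroid β} {w : β → U} {g : ι → α} {f : ι → β} (hg : g.Injective) (hf : f.Injective)
    (hM : IsBinRepOn M (range g) v) (hN : IsBinRepOn N (range f) w)
    (h : ∀ a : ι → ZMod 2, ∑ i, a i • v (g i) = 0 ↔
      ∃ φ : Module.Dual (ZMod 2) U, ∀ i, a i = φ (w (f i))) :
    MatroidIso M N✶ := by
  refine matroidIso_of_indep_image_iff hg hf hM.1.symm hN.1.symm fun J => ?_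
  have hgJ : LinearIndepOn (ZMod 2) v (g '' J) ↔ LinearIndepOn (ZMod 2) (v ∘ g) J :=
    ⟨fun hJ => hJ.comp_of_image hg.injOn, fun hJ => hJ.image_of_comp⟩
  rw [hN.dual_indep_iff (image_subset_range f J), hM.2 _ (image_subset_range g J), forall_mem_range,
    ← image_compl_eq_range_sdiff_image hf, image_image]
  exact hgJ.trans (linearIndepOn_iff_forall_mem_span_compl h)

end IsBinRepOn

end Matroid

section IncidenceVectors

variable {V : Type*}

lemma incVec_mk_apply {x y : V} (hxy : x ≠ y) (z : V) :
    incVec s(x, y) z = (if z = x then 1 else 0) + if z = y then 1 else 0 := by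
  simp only [incVec, Sym2.mem_iff]
  grind

/-- The coboundary over GF(2) of a potential `p` on the vertices: the indicator of the cut between
`{x | p x = 0}` and `{x | p x = 1}`. -/
def coboundary (p : V → ZMod 2) : Sym2 V → ZMod 2 :=
  Sym2.lift ⟨fun x y => p x + p y, fun _ _ => add_comm _ _⟩

@[simp]
lemma coboundary_mk (p : V → ZMod 2) (x y : V) : coboundary p s(x, y) = p x + p y := rfl

lemma dual_incVec_eq_coboundary (φ : Module.Dual (ZMod 2) (V → ZMod 2)) {e : Sym2 V}
    (he : ¬ e.IsDiag) : φ (incVec e) = coboundary (fun z => φ (Pi.single z 1)) e := by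
  induction e with | _ x y
  have hsingle : incVec s(x, y) = Pi.single x 1 + Pi.single y 1 := by
    ext z
    simp [incVec_mk_apply he, Pi.single_apply]
  rw [hsingle, map_add, coboundary_mk]

lemma exists_dual_incVec_iff_exists_coboundary [Finite V] {ι : Type*} {e : ι → Sym2 V}
    (he : ∀ i, ¬ (e i).IsDiag) {a : ι → ZMod 2} :
    (∃ φ : Module.Dual (ZMod 2) (V → ZMod 2), ∀ i, a i = φ (incVec (e i))) ↔
      ∃ p : V → ZMod 2, ∀ i, a i = coboundary p (e i) := by
  simp only [dual_incVec_eq_coboundary _ (he _)]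
  constructor
  · rintro ⟨φ, hφ⟩
    exact ⟨fun z => φ (Pi.single z 1), hφ⟩
  · rintro ⟨p, hp⟩
    exact ⟨(Pi.basisFun (ZMod 2) V).constr (ZMod 2) p, by simpa [← Pi.basisFun_apply] using hp⟩

end IncidenceVectors

section Edges

lemma mem_edgeSet_fromRel {V : Type*} {r : V → V → Prop} {e : Sym2 V} :
    e ∈ (SimpleGraph.fromRel r).edgeSet ↔ ∃ x y, x ≠ y ∧ r x y ∧ e = s(x, y) := by
  induction e with | _ a b
  rw [SimpleGraph.mem_edgeSet, SimpleGraph.fromRel_adj]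
  constructor
  · rintro ⟨hab, h | h⟩
    · exact ⟨a, b, hab, h, rfl⟩
    · exact ⟨b, a, hab.symm, h, Sym2.eq_swap⟩
  · rintro ⟨x, y, hxy, h, he⟩
    rcases Sym2.eq_iff.1 he with ⟨rfl, rfl⟩ | ⟨rfl, rfl⟩
    · exact ⟨hxy, .inl h⟩
    · exact ⟨hxy.symm, .inr h⟩

lemma sym2_mk_add_one_injective {R : Type*} [CommRing R] (h2 : (2 : R) ≠ 0) :
    Function.Injective fun x : R => s(x, x + 1) := by
  intro x y h
  rcases Sym2.eq_iff.1 h with ⟨hxy, -⟩ | ⟨hxy, hyx⟩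
  · exact hxy
  · exact absurd (by linear_combination hyx - hxy) h2

end Edges

section CyclicPotential

variable {m : ℕ} [NeZero m]

lemma add_one_eq_zero_or_val_add_one (x : ZMod m) :
    x.val + 1 = m ∧ x + 1 = 0 ∨ (x + 1).val = x.val + 1 := by
  have hx : x + 1 = ((x.val + 1 : ℕ) : ZMod m) := by simp
  rcases (Nat.add_one_le_iff.2 x.val_lt).eq_or_lt with hlast | hlt
  · exact .inl ⟨hlast, by rw [hx, hlast, ZMod.natCast_self]⟩
  · exact .inr (by rw [hx, ZMod.val_natCast_of_lt hlt])

lemma sum_eq_sum_range_natCast {A : Type*} [AddCommMonoid A] (f : ZMod m → A) :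
    ∑ x, f x = ∑ k ∈ Finset.range m, f k := by
  refine Finset.sum_nbij' ZMod.val (fun k => (k : ZMod m)) ?_ ?_ ?_ ?_ ?_ <;>
    simp +contextual [ZMod.val_lt, ZMod.val_natCast, Nat.mod_eq_of_lt]

lemma exists_sub_eq_of_sum_eq_zero {A : Type*} [AddCommGroup A] {f : ZMod m → A}
    (hf : ∑ x, f x = 0) : ∃ p : ZMod m → A, ∀ x, p (x + 1) - p x = f x := by
  refine ⟨fun x => ∑ k ∈ Finset.range x.val, f k, fun x => ?_⟩
  have hsucc :
      ∑ k ∈ Finset.range (x + 1).val, f k = ∑ k ∈ Finset.range (x.val + 1), f k := by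
    rcases add_one_eq_zero_or_val_add_one x with ⟨hlast, hzero⟩ | hval
    · rw [hzero, hlast, ← sum_eq_sum_range_natCast, hf, ZMod.val_zero, Finset.sum_range_zero]
    · rw [hval]
  simp only [hsucc, Finset.sum_range_succ, add_sub_cancel_left, ZMod.natCast_zmod_val]

end CyclicPotential

section Ladder

variable (n : ℕ) [NeZero n]

/-- The end `i + b * n` on side `b` of the rung `i` of the cubic Möbius ladder, where `i` is read as
a number below `n` and `false`, `true` as `0`, `1`. -/
noncomputable def rungEnd : ZMod n × Bool ≃ ZMod (2 * n) :=
  Equiv.ofBijective (fun x => ((x.1.val + if x.2 then n else 0 : ℕ) : ZMod (2 * n))) <| by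
    rw [Fintype.bijective_iff_injective_and_card]
    refine ⟨?_, by simp [ZMod.card, mul_comm]⟩
    rintro ⟨i, b⟩ ⟨j, c⟩ h
    have hi := i.val_lt
    have hj := j.val_lt
    have hval := congrArg ZMod.val h
    dsimp only at hval
    rw [ZMod.val_natCast_of_lt (by grind), ZMod.val_natCast_of_lt (by grind)] at hval
    have hbc : b = c := by grind
    have hij : i.val = j.val := by grind
    rw [ZMod.val_injective n hij, hbc]

variable {n}

lemma rungEnd_apply (i : ZMod n) (b : Bool) :
    rungEnd n (i, b) = ((i.val + if b then n else 0 : ℕ) : ZMod (2 * n)) := rfl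

lemma rungEnd_add_natCast (i : ZMod n) (b : Bool) : rungEnd n (i, b) + n = rungEnd n (i, !b) := by
  have hnn : (n : ZMod (2 * n)) + n = 0 := by
    rw [← two_mul]
    exact_mod_cast ZMod.natCast_self (2 * n)
  cases b <;> simp [rungEnd_apply, add_assoc, hnn]

/-- This is the twist of the Möbius ladder: past the last rung the sides are exchanged. -/
lemma rungEnd_add_one (i : ZMod n) (b : Bool) :
    rungEnd n (i, b) + 1 = rungEnd n (i + 1, if i + 1 = 0 then !b else b) := by
  rcases add_one_eq_zero_or_val_add_one i with ⟨hlast, hzero⟩ | hval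
  · have hcast : (i.val : ZMod (2 * n)) + 1 = n := by exact_mod_cast congrArg Nat.cast hlast
    rw [if_pos hzero, hzero, ← rungEnd_add_natCast, rungEnd_apply, rungEnd_apply, ZMod.val_zero]
    push_cast
    linear_combination hcast
  · have hne : i + 1 ≠ 0 := by
      rw [← ZMod.val_ne_zero, hval]
      exact i.val.succ_ne_zero
    rw [if_neg hne, rungEnd_apply, rungEnd_apply, hval]
    push_cast
    ring

variable (n) in
/-- The edges of the cubic Möbius ladder: the edge from the end on side `b` of the rung `i` to an
end of the rung `i + 1`, and the rung `i`. -/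
noncomputable def ladderEdge : (ZMod n × Bool) ⊕ ZMod n → Sym2 (ZMod (2 * n))
  | .inl x => s(rungEnd n x, rungEnd n x + 1)
  | .inr i => s(rungEnd n (i, false), rungEnd n (i, true))

lemma mem_edgeSet_cml {e : Sym2 (ZMod (2 * n))} :
    e ∈ (cml n).edgeSet ↔ (∃ x, e = s(x, x + 1)) ∨ ∃ x : ZMod (2 * n), e = s(x, x + n) := by
  have : Fact (1 < 2 * n) := ⟨by have := NeZero.pos n; omega⟩
  have hn : (n : ZMod (2 * n)) ≠ 0 := fun h => by
    have hends := rungEnd_add_natCast (0 : ZMod n) false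
    rw [h, add_zero, (rungEnd n).apply_eq_iff_eq] at hends
    simp at hends
  rw [cml, SimpleGraph.circulantGraph, mem_edgeSet_fromRel]
  constructor
  · rintro ⟨x, y, -, hxy | hxy, rfl⟩
    · exact .inl ⟨y, by rw [← hxy, add_sub_cancel, Sym2.eq_swap]⟩
    · exact .inr ⟨y, by rw [← eq_of_mem_singleton hxy, add_sub_cancel, Sym2.eq_swap]⟩
  · rintro (⟨x, rfl⟩ | ⟨x, rfl⟩)
    · exact ⟨x + 1, x, by simp, by simp, Sym2.eq_swap⟩
    · exact ⟨x + n, x, by simpa using hn, by simp, Sym2.eq_swap⟩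

lemma range_ladderEdge : range (ladderEdge n) = (cml n).edgeSet := by
  ext e
  rw [mem_edgeSet_cml, mem_range, Sum.exists, ← (rungEnd n).exists_congr_right,
    ← (rungEnd n).exists_congr_right]
  simp [ladderEdge, rungEnd_add_natCast, Sym2.eq_swap, eq_comm]

lemma ladderEdge_injective (h2 : (2 : ZMod n) ≠ 0) : Function.Injective (ladderEdge n) := by
  have : Nontrivial (ZMod n) := nontrivial_of_ne _ _ h2
  have h2' : (2 : ZMod (2 * n)) ≠ 0 := fun h => h2 <| by
    rw [← map_ofNat (ZMod.castHom (dvd_mul_left n 2) (ZMod n)) 2, h, map_zero]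
  have hne (x : ZMod n × Bool) (i : ZMod n) : ladderEdge n (.inl x) ≠ ladderEdge n (.inr i) := by
    have hsucc : x.1 + 1 ≠ x.1 := by simp
    rw [ladderEdge, rungEnd_add_one]
    simp only [ladderEdge, ne_eq, Sym2.eq_iff, EmbeddingLike.apply_eq_iff_eq]
    grind
  rintro (x | i) (y | j) h
  · rw [(rungEnd n).injective (sym2_mk_add_one_injective h2' h)]
  · exact absurd h (hne x j)
  · exact absurd h.symm (hne y i)
  · simpa [ladderEdge] using h

lemma coboundary_ladderEdge_quadrangle (p : ZMod (2 * n) → ZMod 2) (i : ZMod n) :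
    coboundary p (ladderEdge n (.inl (i, false))) + coboundary p (ladderEdge n (.inl (i, true))) +
      coboundary p (ladderEdge n (.inr i)) + coboundary p (ladderEdge n (.inr (i + 1))) = 0 := by
  simp only [ladderEdge, coboundary_mk, rungEnd_add_one]
  split_ifs <;> grind

lemma sum_coboundary_ladderEdge_side (p : ZMod (2 * n) → ZMod 2) (b : Bool) :
    ∑ i, coboundary p (ladderEdge n (.inl (i, b))) = coboundary p (ladderEdge n (.inr 0)) := by
  have htwist (i : ZMod n) : coboundary p (ladderEdge n (.inl (i, b))) =
      p (rungEnd n (i, b)) + (p (rungEnd n (i + 1, b)) +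
        if i + 1 = 0 then coboundary p (ladderEdge n (.inr 0)) else 0) := by
    simp only [ladderEdge, coboundary_mk, rungEnd_add_one]
    cases b <;> grind
  have hshift {f : ZMod n → ZMod 2} : ∑ i, f (i + 1) = ∑ i, f i :=
    Equiv.sum_comp (Equiv.addRight (1 : ZMod n)) f
  simp only [htwist, Finset.sum_add_distrib]
  rw [hshift (f := fun i => p (rungEnd n (i, b))), hshift (f := fun i => if i = 0 then _ else 0),
    CharTwo.add_cancel_left, Fintype.sum_ite_eq']

theorem exists_coboundary_ladderEdge_iff {a : (ZMod n × Bool) ⊕ ZMod n → ZMod 2} :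
    (∃ p, ∀ z, a z = coboundary p (ladderEdge n z)) ↔
      (∀ i, a (.inl (i, false)) + a (.inl (i, true)) + a (.inr i) + a (.inr (i + 1)) = 0) ∧
        ∀ b, ∑ i, a (.inl (i, b)) = a (.inr 0) := by
  constructor
  · rintro ⟨p, hp⟩
    simp only [hp]
    exact ⟨coboundary_ladderEdge_quadrangle p, sum_coboundary_ladderEdge_side p⟩
  rintro ⟨hquad, hside⟩
  have hsum : ∑ x, a (.inl ((rungEnd n).symm x)) = 0 := by
    rw [(rungEnd n).symm.sum_comp (fun x => a (.inl x)), Fintype.sum_prod_type_right,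
      Fintype.sum_bool, hside, hside, CharTwo.add_self_eq_zero]
  obtain ⟨p, hp⟩ := exists_sub_eq_of_sum_eq_zero hsum
  have hrail (x : ZMod n × Bool) : a (.inl x) = coboundary p (ladderEdge n (.inl x)) := by
    rw [ladderEdge, coboundary_mk, add_comm, ← CharTwo.sub_eq_add, hp, Equiv.symm_apply_apply]
  have hconst : Function.Periodic
      (fun i => a (.inr i) + coboundary p (ladderEdge n (.inr i))) (1 : ZMod n) := fun i => by
    have hp_quad := coboundary_ladderEdge_quadrangle p i
    have ha_quad := hquad i
    simp only [hrail] at ha_quad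
    grind
  have hrung_zero : a (.inr 0) = coboundary p (ladderEdge n (.inr 0)) := by
    rw [← hside false, ← sum_coboundary_ladderEdge_side p false]
    exact Finset.sum_congr rfl fun i _ => hrail (i, false)
  have hrung (i : ZMod n) : a (.inr i) = coboundary p (ladderEdge n (.inr i)) := by
    have hi := hconst.nat_mul_eq i.val
    simp only [mul_one, ZMod.natCast_zmod_val, hrung_zero, CharTwo.add_self_eq_zero] at hi
    exact CharTwo.add_eq_zero.1 hi
  exact ⟨p, Sum.forall.2 ⟨hrail, hrung⟩⟩

end Ladder

section MobiusMatroid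

variable {n : ℕ}

/-- The elements of `Δ_{n+1} \ γ`: the spoke joining `i + 1` to the hub `b`, and the rim element at
`{i, i + 1}`, for `i = 0` the one which replaces `xy`. With this indexing `deltaElem` and
`ladderEdge` are dual to each other. -/
def deltaElem (n : ℕ) : (ZMod n × Bool) ⊕ ZMod n → Sym2 (ZMod n ⊕ Bool) ⊕ Unit
  | .inl (i, b) => .inl s(.inl (i + 1), .inr b)
  | .inr i => if i = 0 then .inr () else .inl s(.inl i, .inl (i + 1))

lemma rim_injective (h2 : (2 : ZMod n) ≠ 0) :
    Function.Injective fun i : ZMod n => (s(.inl i, .inl (i + 1)) : Sym2 (ZMod n ⊕ Bool)) :=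
  (Sym2.map.injective Sum.inl_injective).comp (sym2_mk_add_one_injective h2)

lemma deltaElem_injective (h2 : (2 : ZMod n) ≠ 0) : Function.Injective (deltaElem n) := by
  have hrim {i j : ZMod n} := (rim_injective h2).eq_iff (a := i) (b := j)
  rintro (⟨i, b⟩ | i) (⟨j, c⟩ | j) h <;> simp only [deltaElem] at h
  · simpa using h
  · split_ifs at h
    simp at h
  · split_ifs at h
    simp at h
  · grind

lemma mem_edgeSet_gplus [Nontrivial (ZMod n)] {e : Sym2 (ZMod n ⊕ Bool)} :
    e ∈ (gplus n).edgeSet ↔ (∃ i, e = s(.inl i, .inl (i + 1))) ∨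
      (∃ i b, e = s(.inl i, .inr b)) ∨ e = s(.inr false, .inr true) := by
  rw [gplus, mem_edgeSet_fromRel]
  constructor
  · rintro ⟨x, y, -, ⟨i, rfl, rfl⟩ | ⟨i, rfl, rfl | rfl⟩ | ⟨rfl, rfl⟩, rfl⟩ <;> simp
  · rintro (⟨i, rfl⟩ | ⟨i, b, rfl⟩ | rfl)
    · exact ⟨_, _, by simp, .inl ⟨i, rfl, rfl⟩, rfl⟩
    · exact ⟨_, _, by simp, .inr (.inl ⟨i, rfl, by cases b <;> simp⟩), rfl⟩
    · exact ⟨_, _, by simp, .inr (.inr ⟨rfl, rfl⟩), rfl⟩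

lemma range_deltaElem (h2 : (2 : ZMod n) ≠ 0) : range (deltaElem n) =
    deltaGround n \ {.inl s((.inr false : ZMod n ⊕ Bool), .inr true)} := by
  have : Nontrivial (ZMod n) := nontrivial_of_ne _ _ h2
  have hrim (i : ZMod n) : (s(.inl i, .inl (i + 1)) : Sym2 (ZMod n ⊕ Bool)) = s(.inl 0, .inl 1) ↔
      i = 0 := by
    simpa using (rim_injective h2).eq_iff (a := i) (b := 0)
  refine Subset.antisymm ?_ ?_
  · rintro _ ⟨⟨i, b⟩ | i, rfl⟩
    · exact ⟨.inl ⟨_, ⟨mem_edgeSet_gplus.2 (.inr (.inl ⟨i + 1, b, rfl⟩)), by simp⟩, rfl⟩,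
        by simp [deltaElem]⟩
    · by_cases hi : i = 0 <;> simp [deltaElem, deltaGround, mem_edgeSet_gplus, hrim, hi]
  · rintro _ ⟨⟨e, ⟨he, hxy⟩, rfl⟩ | rfl, hγ⟩
    · rcases mem_edgeSet_gplus.1 he with ⟨i, rfl⟩ | ⟨i, b, rfl⟩ | rfl
      · exact ⟨.inr i, if_neg (mt (hrim i).2 hxy)⟩
      · exact ⟨.inl (i - 1, b), by simp [deltaElem]⟩
      · exact absurd rfl hγ
    · exact ⟨.inr 0, if_pos rfl⟩

lemma deltaVec_spoke_inl (i : ZMod n) (b : Bool) (j : ZMod n) :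
    deltaVec n (deltaElem n (.inl (i, b))) (.inl j) = if j = i + 1 then 1 else 0 := by
  simp [deltaVec, deltaElem, incVec_mk_apply]

lemma deltaVec_spoke_inr (i : ZMod n) (b c : Bool) :
    deltaVec n (deltaElem n (.inl (i, b))) (.inr c) = if c = b then 1 else 0 := by
  simp [deltaVec, deltaElem, incVec_mk_apply]

variable [Nontrivial (ZMod n)]

lemma deltaVec_rim_inl (i j : ZMod n) :
    deltaVec n (deltaElem n (.inr i)) (.inl j) =
      (if j = i then 1 else 0) + if j = i + 1 then 1 else 0 := by
  by_cases hi : i = 0 <;> simp [deltaVec, deltaElem, incVec_mk_apply, hi]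

lemma deltaVec_rim_inr (i : ZMod n) (c : Bool) :
    deltaVec n (deltaElem n (.inr i)) (.inr c) = if i = 0 then 1 else 0 := by
  by_cases hi : i = 0 <;> cases c <;> simp [deltaVec, deltaElem, incVec_mk_apply, hi]

variable [NeZero n] {a : (ZMod n × Bool) ⊕ ZMod n → ZMod 2}

lemma sum_smul_deltaVec_eq_zero_iff :
    ∑ z, a z • deltaVec n (deltaElem n z) = 0 ↔
      (∀ i, a (.inl (i, false)) + a (.inl (i, true)) + a (.inr i) + a (.inr (i + 1)) = 0) ∧
        ∀ b, ∑ i, a (.inl (i, b)) = a (.inr 0) := by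
  have hvertex (j : ZMod n) : (∑ z, a z • deltaVec n (deltaElem n z)) (.inl (j + 1)) =
      a (.inl (j, false)) + a (.inl (j, true)) + a (.inr j) + a (.inr (j + 1)) := by
    simp only [Finset.sum_apply, Pi.smul_apply, smul_eq_mul, Fintype.sum_sum_type,
      Fintype.sum_prod_type, Fintype.sum_bool, deltaVec_spoke_inl, deltaVec_rim_inl,
      Finset.sum_add_distrib, mul_add, mul_ite, mul_one, mul_zero, add_left_inj,
      Finset.sum_ite_eq, Finset.mem_univ, if_true]
    ring
  have hhub (b : Bool) : (∑ z, a z • deltaVec n (deltaElem n z)) (.inr b) =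
      ∑ i, a (.inl (i, b)) + a (.inr 0) := by
    simp [Fintype.sum_prod_type, deltaVec_spoke_inr, deltaVec_rim_inr]
  rw [funext_iff, Sum.forall, ← (Equiv.addRight (1 : ZMod n)).forall_congr_right]
  simp only [Equiv.coe_addRight, hvertex, hhub, Pi.zero_apply, CharTwo.add_eq_zero]

theorem sum_smul_deltaVec_eq_zero_iff_exists_dual :
    ∑ z, a z • deltaVec n (deltaElem n z) = 0 ↔
      ∃ φ : Module.Dual (ZMod 2) (ZMod (2 * n) → ZMod 2),
        ∀ z, a z = φ (incVec (ladderEdge n z)) := by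
  have hdiag (z : (ZMod n × Bool) ⊕ ZMod n) : ¬ (ladderEdge n z).IsDiag :=
    (cml n).not_isDiag_of_mem_edgeSet (range_ladderEdge.subset (mem_range_self z))
  rw [sum_smul_deltaVec_eq_zero_iff, exists_dual_incVec_iff_exists_coboundary hdiag,
    exists_coboundary_ladderEdge_iff]

end MobiusMatroid

/-- `Δ_{n+1} \ γ` is isomorphic to `M*(CML_{2n})`, the dual of the cycle matroid of the
cubic Möbius ladder on `2n` vertices. -/
theorem statement19 (n : ℕ) (hn : 3 ≤ n)
    (D : Matroid (Sym2 (ZMod n ⊕ Bool) ⊕ Unit))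
    (hD : IsBinRepOn D (deltaGround n) (deltaVec n))
    (N : Matroid (Sym2 (ZMod (2 * n)))) (hN : IsCycleMatroidOf N (cml n)) :
    MatroidIso (mDel D {Sum.inl s((Sum.inr false : ZMod n ⊕ Bool), Sum.inr true)}) N✶ := by
  have : NeZero n := ⟨by omega⟩
  have h2 : (2 : ZMod n) ≠ 0 := fun h => by
    have hdvd : n ∣ 2 := (ZMod.natCast_eq_zero_iff 2 n).1 (mod_cast h)
    exact absurd (Nat.le_of_dvd two_pos hdvd) (by omega)
  have : Nontrivial (ZMod n) := nontrivial_of_ne _ _ h2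
  have hM : IsBinRepOn (mDel D {.inl s((.inr false : ZMod n ⊕ Bool), .inr true)})
      (range (deltaElem n)) (deltaVec n) := by
    rw [range_deltaElem h2]
    exact hD.delete _
  have hN' : IsBinRepOn N (range (ladderEdge n)) incVec := by
    rwa [range_ladderEdge]
  exact hM.matroidIso_dual (deltaElem_injective h2) (ladderEdge_injective h2) hN' fun _ =>
    sum_smul_deltaVec_eq_zero_iff_exists_dual
end
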